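/- The set [M_{2,3}, ℝP²] of free homotopy classes of continuous maps from the trefoil-knot-complement model M_{2,3} to the real projective plane has exactly 3 elements: that is, there are exactly three topological sectors of a uniaxial nematic liquid crystal with a trefoil knot line defect. -/

import Mathlib

/-- Free homotopy classes of continuous maps `M → X`: the quotient of `C(M, X)` by the
homotopy relation. -/
def FreeHomotopyClasses (M X : Type*) [TopologicalSpace M] [TopologicalSpace X] : Type _ :=
  Quot fun f g : C(M, X) => f.Homotopic g

/-- The identifications `(0, z) ~ (0, e^{2πi/p} z)` and `(1, z) ~ (1, e^{2πi/q} z)` on the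
cylinder `[0, 1] × S¹`. -/
def MpqRel (p q : ℕ) (a b : Set.Icc (0 : ℝ) 1 × Circle) : Prop :=
  ((a.1 : ℝ) = 0 ∧ (b.1 : ℝ) = 0 ∧ b.2 = Circle.exp (2 * Real.pi / p) * a.2) ∨
  ((a.1 : ℝ) = 1 ∧ (b.1 : ℝ) = 1 ∧ b.2 = Circle.exp (2 * Real.pi / q) * a.2)

/-- The space `M_{p,q}`: the quotient of the cylinder `[0, 1] × S¹` by the identifications
`(0, z) ~ (0, e^{2πi/p} z)` and `(1, z) ~ (1, e^{2πi/q} z)`, with the quotient topology.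
`M_{2,3}` is a deformation retract of the complement of the trefoil knot in `S³`. -/
def Mpq (p q : ℕ) : Type := Quot (MpqRel p q)

noncomputable instance (p q : ℕ) : TopologicalSpace (Mpq p q) := instTopologicalSpaceQuot

/-- The real projective plane: the quotient of the unit sphere `S² ⊆ ℝ³` by the antipodal
identification `x ~ −x`, with the quotient topology. -/
def RP2 : Type :=
  Quot fun x y : Metric.sphere (0 : EuclideanSpace ℝ (Fin 3)) 1 =>
    (y : EuclideanSpace ℝ (Fin 3)) = -(x : EuclideanSpace ℝ (Fin 3))

noncomputable instance : TopologicalSpace RP2 := instTopologicalSpaceQuot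

/-!
The unit quaternions `S³` act transitively on `ℝP²` by rotations, and the stabiliser of a line is
`T ∪ T k`, where `T` is the circle of unit complex numbers. Transport along short rotations lifts
every map `M_{p,q} → ℝP²` to a map `h : [0, 1] × ℝ → S³` on the cover of the cylinder, and two maps
are homotopic exactly when a map `M_{p,q} → S³` carries one to the other: `M_{p,q}` is
two-dimensional, so by Stone–Weierstrass and a measure-zero argument every map from it to `S³` is
null-homotopic.

The failure of `h` to descend is a cocycle in the stabiliser. For even `p` and odd `q`, solving
difference equations for angle functions makes it constant along each exceptional circle, with
values `u` around `t = 0` and `v` around `t = 1` satisfying `u ^ p = v ^ q`. Here `u` is `1` or `k`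
and `v` is in `T`. When `u = 1` and `p`, `q` are coprime, a linear change of angle turns `v` into
`1`. When `u = k`, the `q` solutions of `v ^ q = k ^ p` are distinguished by the homotopy class up
to `v ↦ v⁻¹`, which is conjugation by `k`. This leaves `1 + (q + 1) / 2` classes.
-/

open Quaternion Topology unitInterval

theorem map_add_nat_mul {G : Type*} [Monoid G] {g : ℝ → G} {κ : G} {T : ℝ}
    (hg : ∀ θ, g (θ + T) = g θ * κ) (n : ℕ) (θ : ℝ) : g (θ + n * T) = g θ * κ ^ n := by
  induction n with
  | zero => simp
  | succ n ih => rw [Nat.cast_succ, add_one_mul, ← add_assoc, hg, ih, mul_assoc, pow_succ]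

theorem FreeHomotopyClasses.mk_eq_mk_iff {M X : Type*} [TopologicalSpace M] [TopologicalSpace X]
    {F F' : C(M, X)} :
    (Quot.mk _ F : FreeHomotopyClasses M X) = Quot.mk _ F' ↔ F.Homotopic F' := by
  rw [Quot.eq, ContinuousMap.Homotopic.equivalence.eqvGen_iff]

namespace DifferenceEquation

variable {X : Type*} {T s : ℝ} {a : X × ℝ → ℝ}

theorem finite_support_shift {C : ℝ} (s θ : ℝ) (hT : 0 < T)
    (ha : ∀ x θ, θ ≤ C → a (x, θ) = 0) :
    {n : ℕ | ∃ x, ∃ τ < θ, s ^ n * a (x, τ - (n + 1) * T) ≠ 0}.Finite := by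
  obtain ⟨N, hN⟩ := exists_nat_gt ((θ - C) / T)
  rw [div_lt_iff₀ hT] at hN
  refine (Set.finite_lt_nat N).subset ?_
  rintro n ⟨x, τ, hτ, hn⟩
  by_contra hNn
  have : (N : ℝ) ≤ n := by exact_mod_cast not_lt.1 hNn
  exact hn (by rw [ha _ _ (by nlinarith), mul_zero])

variable [TopologicalSpace X]

theorem exists_solution_of_eq_zero_of_le {C : ℝ} (hT : 0 < T) (ha : Continuous a)
    (haC : ∀ x θ, θ ≤ C → a (x, θ) = 0) :
    ∃ φ : X × ℝ → ℝ, Continuous φ ∧ (∀ x θ, φ (x, θ + T) = s * φ (x, θ) + a (x, θ)) ∧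
      ∀ x, (∀ θ, a (x, θ) = 0) → ∀ θ, φ (x, θ) = 0 := by
  have hfin (x : X) (θ : ℝ) :
      (Function.support fun n : ℕ => s ^ n * a (x, θ - (n + 1) * T)).Finite :=
    (finite_support_shift s (θ + 1) hT haC).subset fun n hn => ⟨x, θ, lt_add_one θ, hn⟩
  refine ⟨fun z => ∑ᶠ n : ℕ, s ^ n * a (z.1, z.2 - (n + 1) * T), ?_, fun x θ => ?_,
    fun x hx θ => by simp [hx]⟩
  · refine continuous_finsum (fun n => by fun_prop) fun z => ⟨Prod.snd ⁻¹' Set.Iio (z.2 + 1),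
      continuousAt_snd.preimage_mem_nhds (Iio_mem_nhds (lt_add_one _)), ?_⟩
    refine (finite_support_shift s (z.2 + 1) hT haC).subset ?_
    rintro n ⟨w, hw, hlt⟩
    exact ⟨w.1, w.2, hlt, hw⟩
  · dsimp only
    rw [← tsum_eq_finsum (L := .unconditional ℕ) (hfin x (θ + T)),
      ← tsum_eq_finsum (L := .unconditional ℕ) (hfin x θ),
      (summable_of_hasFiniteSupport (hfin x (θ + T))).tsum_eq_zero_add, ← tsum_mul_left, add_comm]
    congr 1
    · refine tsum_congr fun n => ?_
      rw [pow_succ' s n, mul_assoc]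
      congr 4
      push_cast
      ring
    · simp

/-- The datum is cut into a part supported on the right, solved by forward iteration, and a part
supported on the left, solved by forward iteration of the reflected equation. -/
theorem exists_solution (hT : 0 < T) (hs : s ≠ 0) (ha : Continuous a) :
    ∃ φ : X × ℝ → ℝ, Continuous φ ∧ (∀ x θ, φ (x, θ + T) = s * φ (x, θ) + a (x, θ)) ∧
      ∀ x, (∀ θ, a (x, θ) = 0) → ∀ θ, φ (x, θ) = 0 := by
  let χ : ℝ → ℝ := fun θ => max 0 (min 1 θ)
  have hχ : Continuous χ := by fun_prop
  obtain ⟨u, hu, hu_shift, hu_zero⟩ :=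
    exists_solution_of_eq_zero_of_le (s := s) (a := fun z => a z * χ z.2) (C := 0) hT
      (by fun_prop) fun x θ hθ => by simp [χ, hθ]
  obtain ⟨v, hv, hv_shift, hv_zero⟩ :=
    exists_solution_of_eq_zero_of_le (s := s⁻¹) (C := -1 - T)
      (a := fun z => -s⁻¹ * (a (z.1, -z.2 - T) * (1 - χ (-z.2 - T)))) hT
      (by fun_prop) fun x θ hθ => by
        simp [χ, min_eq_left (show (1 : ℝ) ≤ -θ - T by linarith)]
  refine ⟨fun z => u z + v (z.1, -z.2), by fun_prop, fun x θ => ?_, fun x hx θ => ?_⟩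
  · have h := hv_shift x (-(θ + T))
    simp only [show -(θ + T) + T = -θ by ring, show - -(θ + T) - T = θ by ring] at h
    dsimp only
    rw [hu_shift, h]
    field_simp
    ring
  · simp [hu_zero x fun θ => by simp [hx], hv_zero x fun θ => by simp [hx]]

end DifferenceEquation

/-- Continuous choices of group elements carrying `x` to `y`, for `y` near `x`: the substitute used
here for local sections of the orbit map of a transitive action. -/
structure LocalTransport (G X : Type*) [TopologicalSpace G] [TopologicalSpace X] [Group G]
    [MulAction G X] where
  /-- The pairs between which transport is defined. -/
  domain : Set (X × X)
  isOpen_domain : IsOpen domain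
  diag_mem : ∀ x, (x, x) ∈ domain
  /-- The element carrying the first point to the second; its values off `domain` are junk. -/
  transport : X × X → G
  continuousOn : ContinuousOn transport domain
  smul_eq : ∀ {x y}, (x, y) ∈ domain → transport (x, y) • x = y
  self_eq_one : ∀ x, transport (x, x) = 1

theorem exists_pos_forall_abs_le_mem_of_isOpen {K : Type*} [TopologicalSpace K] [CompactSpace K]
    {U : Set (K × ℝ)} (hU : IsOpen U) (h0 : ∀ k, (k, 0) ∈ U) :
    ∃ δ > 0, ∀ k w, |w| ≤ δ → (k, w) ∈ U := by
  obtain ⟨A, B, -, hB, hA, hB0, hAB⟩ := generalized_tube_lemma (isCompact_univ (X := K))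
    (isCompact_singleton (x := (0 : ℝ))) hU (by rintro ⟨k, w⟩ ⟨-, rfl⟩; exact h0 k)
  obtain ⟨ε, hε, hball⟩ := Metric.mem_nhds_iff.1 (hB.mem_nhds (hB0 rfl))
  refine ⟨ε / 2, by positivity, fun k w hw => hAB ⟨hA trivial, hball ?_⟩⟩
  rw [mem_ball_zero_iff, Real.norm_eq_abs]
  linarith

/-- The truncation of `s` to the interval `[-r, r]`. -/
def clamp (r s : ℝ) : ℝ := max (-r) (min r s)

theorem continuous_clamp (r : ℝ) : Continuous (clamp r) := by
  unfold clamp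
  fun_prop

theorem clamp_zero (s : ℝ) : clamp 0 s = 0 := by simp [clamp]

theorem clamp_of_abs_le {r s : ℝ} (h : |s| ≤ r) : clamp r s = s := by
  rw [abs_le] at h
  rw [clamp, min_eq_right h.2, max_eq_right h.1]

theorem abs_clamp_sub_clamp_le (r r' s : ℝ) : |clamp r s - clamp r' s| ≤ |r - r'| := by
  refine (abs_max_sub_max_le_max _ _ _ _).trans (max_le ?_ ?_)
  · rw [neg_sub_neg, abs_sub_comm]
  · simpa using abs_min_sub_min_le_max r s r' s

namespace LocalTransport

variable {G X K : Type*} [TopologicalSpace G] [TopologicalSpace X] [Group G]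
  [MulAction G X] (τ : LocalTransport G X)

/-- The product of the transports along the paths `H (k, ·)` from `0` to `s`, in steps of length at
most `δ`, stopping at distance `n * δ`. -/
def chain (H : K × ℝ → X) (δ : ℝ) : ℕ → K × ℝ → G
  | 0, _ => 1
  | n + 1, z =>
    τ.transport (H (z.1, clamp (n * δ) z.2), H (z.1, clamp ((n + 1) * δ) z.2)) * chain H δ n z

variable {H : K × ℝ → X} {δ : ℝ}

theorem chain_step_mem_domain (hδ : 0 < δ)
    (hH : ∀ k s s', |s - s'| ≤ δ → (H (k, s), H (k, s')) ∈ τ.domain) (n : ℕ) (z : K × ℝ) :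
    (H (z.1, clamp (n * δ) z.2), H (z.1, clamp ((n + 1) * δ) z.2)) ∈ τ.domain := by
  refine hH _ _ _ ((abs_clamp_sub_clamp_le _ _ _).trans_eq ?_)
  rw [show n * δ - (n + 1) * δ = -δ by ring, abs_neg, abs_of_pos hδ]

theorem chain_smul (hδ : 0 < δ)
    (hH : ∀ k s s', |s - s'| ≤ δ → (H (k, s), H (k, s')) ∈ τ.domain) (n : ℕ) (k : K) (s : ℝ) :
    τ.chain H δ n (k, s) • H (k, 0) = H (k, clamp (n * δ) s) := by
  induction n with
  | zero => simp [chain, clamp_zero]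
  | succ n ih =>
    rw [chain, mul_smul, ih, τ.smul_eq (τ.chain_step_mem_domain hδ hH n (k, s)), Nat.cast_succ]

theorem chain_eq_of_le (hδ : 0 < δ) {n m : ℕ} (hnm : n ≤ m) {k : K} {s : ℝ} (hs : |s| ≤ n * δ) :
    τ.chain H δ m (k, s) = τ.chain H δ n (k, s) := by
  induction m, hnm using Nat.le_induction with
  | base => rfl
  | succ m hnm ih =>
    have hm : |s| ≤ m * δ := hs.trans (by gcongr)
    rw [chain, clamp_of_abs_le hm, clamp_of_abs_le (hm.trans (by gcongr; linarith)),
      τ.self_eq_one, one_mul, ih]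

variable [TopologicalSpace K] [ContinuousMul G]

theorem continuous_chain (hδ : 0 < δ) (hcont : Continuous H)
    (hH : ∀ k s s', |s - s'| ≤ δ → (H (k, s), H (k, s')) ∈ τ.domain) (n : ℕ) :
    Continuous (τ.chain H δ n) := by
  induction n with
  | zero => exact continuous_const
  | succ n ih =>
    have hclamp (r : ℝ) : Continuous fun z : K × ℝ => H (z.1, clamp r z.2) :=
      hcont.comp (continuous_fst.prodMk ((continuous_clamp r).comp continuous_snd))
    exact (τ.continuousOn.comp_continuous ((hclamp _).prodMk (hclamp _))
      (τ.chain_step_mem_domain hδ hH n)).mul ih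

include τ

theorem exists_smul_eq_of_uniform (hδ : 0 < δ) (hcont : Continuous H)
    (hH : ∀ k s s', |s - s'| ≤ δ → (H (k, s), H (k, s')) ∈ τ.domain) :
    ∃ R : K × ℝ → G, Continuous R ∧ ∀ k s, R (k, s) • H (k, 0) = H (k, s) := by
  have le_ceil (s : ℝ) : |s| ≤ ⌈|s| / δ⌉₊ * δ := (div_le_iff₀ hδ).1 (Nat.le_ceil _)
  refine ⟨fun z => τ.chain H δ ⌈|z.2| / δ⌉₊ z, ?_, fun k s => ?_⟩
  · refine continuous_iff_continuousAt.2 fun ⟨k, s⟩ => ?_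
    obtain ⟨n, hn⟩ := exists_nat_gt (|s| / δ)
    rw [div_lt_iff₀ hδ] at hn
    refine (τ.continuous_chain hδ hcont hH n).continuousAt.congr ?_
    filter_upwards [continuous_snd.abs.continuousAt.eventually_lt_const hn] with z hz
    exact τ.chain_eq_of_le hδ (Nat.ceil_le.2 ((div_le_iff₀ hδ).2 hz.le)) (le_ceil z.2)
  · exact (τ.chain_smul hδ hH _ k s).trans (by rw [clamp_of_abs_le (le_ceil s)])

theorem exists_smul_eq_homotopy [CompactSpace K] {H : K × I → X}
    (hH : Continuous H) :
    ∃ R : K × I → G, Continuous R ∧ ∀ k t, R (k, t) • H (k, 0) = H (k, t) := by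
  let π : ℝ → I := Set.projIcc 0 1 zero_le_one
  have hπ : Continuous π := continuous_projIcc
  obtain ⟨δ, hδ, hsmall⟩ := exists_pos_forall_abs_le_mem_of_isOpen (K := K × I)
    (U := (fun z => (H z.1, H (z.1.1, π (z.1.2 + z.2)))) ⁻¹' τ.domain)
    (τ.isOpen_domain.preimage (by fun_prop)) fun z => by
      simpa [π, Set.projIcc_val] using τ.diag_mem (H z)
  obtain ⟨R, hR, hRH⟩ := τ.exists_smul_eq_of_uniform (H := fun z : K × ℝ => H (z.1, π z.2)) hδ
    (by fun_prop) fun k s s' hs => by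
      have := hsmall (k, π s) (π s' - π s)
        ((Set.abs_projIcc_sub_projIcc zero_le_one).trans ((abs_sub_comm _ _).trans_le hs))
      simpa [π, Set.projIcc_val] using this
  refine ⟨fun z => R (z.1, z.2), by fun_prop, fun k t => ?_⟩
  simpa [π, Set.projIcc_val] using hRH k t

theorem exists_smul_eq_loop {c : Circle → X} (hc : Continuous c) :
    ∃ R : ℝ → G, Continuous R ∧ ∀ θ, R θ • c 1 = c (Circle.exp θ) := by
  obtain ⟨δ, hδ, hsmall⟩ := exists_pos_forall_abs_le_mem_of_isOpen (K := Circle)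
    (U := (fun z => (c z.1, c (z.1 * Circle.exp z.2))) ⁻¹' τ.domain)
    (τ.isOpen_domain.preimage (by fun_prop)) fun z => by simpa using τ.diag_mem (c z)
  obtain ⟨R, hR, hRc⟩ := τ.exists_smul_eq_of_uniform (K := Unit)
    (H := fun z => c (Circle.exp z.2)) hδ (by fun_prop) fun _ s s' hs => by
      simpa [← Circle.exp_add] using hsmall (Circle.exp s) (s' - s) (by rwa [abs_sub_comm])
  exact ⟨fun θ => R ((), θ), by fun_prop, fun θ => by simpa using hRc () θ⟩

theorem exists_smul_eq_cylinder {F : I × Circle → X} (hF : Continuous F) :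
    ∃ R : I × ℝ → G, Continuous R ∧ ∀ t θ, R (t, θ) • F (0, 1) = F (t, Circle.exp θ) := by
  obtain ⟨P, hP, hPF⟩ := τ.exists_smul_eq_homotopy (K := Circle) (H := fun z => F (z.2, z.1))
    (by fun_prop)
  obtain ⟨Q, hQ, hQF⟩ := τ.exists_smul_eq_loop (c := fun z => F (0, z)) (by fun_prop)
  refine ⟨fun z => P (Circle.exp z.2, z.1) * Q z.2, by fun_prop, fun t θ => ?_⟩
  rw [mul_smul, hQF, hPF]

theorem exists_smul_eq_of_homotopic [CompactSpace K] {F F' : C(K, X)}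
    (h : F.Homotopic F') : ∃ R : C(K, G), ∀ k, R k • F k = F' k := by
  obtain ⟨H⟩ := h
  obtain ⟨R, hR, hRH⟩ := τ.exists_smul_eq_homotopy (H := fun z : K × I => H (z.2, z.1))
    (by fun_prop)
  exact ⟨⟨fun k => R (k, 1), by fun_prop⟩, fun k => by simpa using hRH k 1⟩

end LocalTransport

theorem homotopic_of_segment_subset {K V : Type*} [TopologicalSpace K] [AddCommGroup V]
    [Module ℝ V] [TopologicalSpace V] [IsTopologicalAddGroup V] [ContinuousSMul ℝ V] {S : Set V}
    {f g : C(K, S)} (h : ∀ k, segment ℝ (f k : V) (g k) ⊆ S) : f.Homotopic g := by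
  let Φ := ContinuousMap.Homotopy.affine
    (X := K) (E := V) ⟨fun k => f k, by fun_prop⟩ ⟨fun k => g k, by fun_prop⟩
  have hΦ (z : I × K) : Φ z ∈ S := by
    refine h z.2 ?_
    rw [segment_eq_image_lineMap]
    exact ⟨z.1, z.1.2, rfl⟩
  exact ⟨⟨⟨fun z => ⟨Φ z, hΦ z⟩, by fun_prop⟩, fun k => Subtype.ext (Φ.apply_zero k),
    fun k => Subtype.ext (Φ.apply_one k)⟩⟩

/-- The continuous functions on `K` that become `C¹` functions on `E` in the parametrisation
`π : D → K`, whose parameters are regarded as points of `E` through `ι`. -/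
def smoothSubalgebra {K D E : Type*} [TopologicalSpace K] [NormedAddCommGroup E] [NormedSpace ℝ E]
    (π : D → K) (ι : D → E) : Subalgebra ℝ C(K, ℝ) where
  carrier := {f | ∃ F : E → ℝ, ContDiff ℝ 1 F ∧ ∀ d, f (π d) = F (ι d)}
  mul_mem' := by
    rintro f g ⟨F, hF, hf⟩ ⟨G, hG, hg⟩
    exact ⟨fun e => F e * G e, hF.mul hG, fun d => by simp [hf, hg]⟩
  add_mem' := by
    rintro f g ⟨F, hF, hf⟩ ⟨G, hG, hg⟩
    exact ⟨fun e => F e + G e, hF.add hG, fun d => by simp [hf, hg]⟩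
  algebraMap_mem' c := ⟨fun _ => c, contDiff_const, fun _ => rfl⟩

section Nullhomotopic

variable {K D E V : Type*} [TopologicalSpace K] [NormedAddCommGroup E]
  [NormedSpace ℝ E] [NormedAddCommGroup V] [NormedSpace ℝ V] [FiniteDimensional ℝ V]
  {π : D → K} {ι : D → E}

theorem exists_contDiff_norm_sub_lt [CompactSpace K] (hsep : (smoothSubalgebra π ι).SeparatesPoints)
    (f : C(K, V)) {ε : ℝ} (hε : 0 < ε) :
    ∃ (g : C(K, V)) (F : E → V), ContDiff ℝ 1 F ∧ (∀ d, g (π d) = F (ι d)) ∧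
      ∀ k, ‖g k - f k‖ < ε := by
  let e := (Module.finBasis ℝ V).equivFunL
  let L : (Fin (Module.finrank ℝ V) → ℝ) →L[ℝ] V := e.symm
  have hη : 0 < ε / (‖L‖ + 1) := by positivity
  have happrox (i : Fin (Module.finrank ℝ V)) : ∃ g ∈ smoothSubalgebra π ι,
      ∀ k, ‖g k - e (f k) i‖ < ε / (‖L‖ + 1) := by
    obtain ⟨g, hg⟩ := ContinuousMap.exists_mem_subalgebra_near_continuous_of_separatesPoints
      _ hsep (fun k => e (f k) i) (by fun_prop) _ hη
    exact ⟨g, g.2, hg⟩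
  choose g hg hgf using happrox
  choose F hF hgF using hg
  refine ⟨⟨fun k => L fun i => g i k, by fun_prop⟩, fun x => L fun i => F i x,
    L.contDiff.comp (contDiff_pi.2 hF), fun d => by simp [hgF], fun k => ?_⟩
  calc ‖L (fun i => g i k) - f k‖ = ‖L ((fun i => g i k) - e (f k))‖ := by simp [L]
    _ ≤ ‖L‖ * ‖(fun i => g i k) - e (f k)‖ := L.le_opNorm _
    _ ≤ ‖L‖ * (ε / (‖L‖ + 1)) := by
      gcongr
      exact (pi_norm_le_iff_of_nonneg hη.le).2 fun i => (hgf i k).le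
    _ < ε := by
      rw [mul_div_assoc', div_lt_iff₀ (by positivity)]
      nlinarith

theorem exists_forall_smul_ne {F : E → V} (hF : ContDiff ℝ 1 F) [FiniteDimensional ℝ E]
    (hdim : Module.finrank ℝ E + 1 < Module.finrank ℝ V) : ∃ v, ∀ (r : ℝ) x, r • F x ≠ v := by
  have hcone : ContDiff ℝ 1 fun z : ℝ × E => z.1 • F z.2 :=
    contDiff_fst.smul (hF.comp contDiff_snd)
  obtain ⟨v, hv⟩ := (hcone.dense_compl_range_of_finrank_lt_finrank (by
    rw [Module.finrank_prod, Module.finrank_self]; omega)).nonempty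
  exact ⟨v, fun r x h => hv ⟨(r, x), h⟩⟩

theorem nullhomotopic_of_smooth [FiniteDimensional ℝ E] (hπ : Function.Surjective π)
    (hdim : Module.finrank ℝ E + 1 < Module.finrank ℝ V) {g : C(K, ({0}ᶜ : Set V))} {F : E → V}
    (hF : ContDiff ℝ 1 F) (hgF : ∀ d, (g (π d) : V) = F (ι d)) : g.Nullhomotopic := by
  obtain ⟨v, hv⟩ := exists_forall_smul_ne hF hdim
  refine ⟨⟨v, fun h => hv 0 0 (by simpa using h.symm)⟩, homotopic_of_segment_subset fun k => ?_⟩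
  obtain ⟨d, rfl⟩ := hπ k
  rintro _ ⟨a, b, -, -, hab, rfl⟩ (h0 : a • (g (π d) : V) + b • v = 0)
  have hb : b ≠ 0 := by
    rintro rfl
    obtain rfl : a = 1 := by simpa using hab
    exact (g (π d)).2 (by simpa using h0)
  refine hv (-(b⁻¹ * a)) (ι d) ?_
  rw [← hgF, neg_smul, mul_smul, eq_neg_of_add_eq_zero_left h0, smul_neg, neg_neg,
    inv_smul_smul₀ hb]

/-- Approximate by a smooth map, whose values miss some line through the origin. -/
theorem nullhomotopic_of_separatesPoints [CompactSpace K] [FiniteDimensional ℝ E]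
    (hπ : Function.Surjective π) (hsep : (smoothSubalgebra π ι).SeparatesPoints)
    (hdim : Module.finrank ℝ E + 1 < Module.finrank ℝ V) (f : C(K, ({0}ᶜ : Set V))) :
    f.Nullhomotopic := by
  obtain ⟨ε, hε, hfε⟩ := (isCompact_univ (X := K)).exists_forall_le' (f := fun k => ‖(f k : V)‖)
    (by fun_prop) (a := 0) fun k _ => norm_pos_iff.2 (f k).2
  obtain ⟨g, F, hF, hgF, hgf⟩ :=
    exists_contDiff_norm_sub_lt hsep ⟨fun k => (f k : V), by fun_prop⟩ hε
  have hball (k : K) : Metric.ball (f k : V) ε ⊆ {0}ᶜ := by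
    rintro _ h rfl
    exact (hfε k trivial).not_gt (by simpa using h)
  have hg (k : K) : g k ∈ Metric.ball (f k : V) ε := by
    rw [mem_ball_iff_norm]
    exact hgf k
  let g' : C(K, ({0}ᶜ : Set V)) := ⟨fun k => ⟨g k, hball k (hg k)⟩, by fun_prop⟩
  obtain ⟨v, hv⟩ := nullhomotopic_of_smooth (g := g') hπ hdim hF hgF
  refine ⟨v, .trans (homotopic_of_segment_subset fun k => ?_) hv⟩
  exact ((convex_ball _ _).segment_subset (Metric.mem_ball_self hε) (hg k)).trans (hball k)

end Nullhomotopic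

/-- The unit sphere of `ℝ³`. -/
abbrev S2 : Type := Metric.sphere (0 : EuclideanSpace ℝ (Fin 3)) 1

/-- The group of unit quaternions. -/
abbrev S3 : Type := Metric.sphere (0 : ℍ[ℝ]) 1

namespace S3

-- A shortcut: without it, finding the monoid structure of `S3` times out.
noncomputable instance : Group S3 := inferInstance

theorem coe_mul_star (q : S3) : (q : ℍ[ℝ]) * star (q : ℍ[ℝ]) = 1 := by
  rw [Quaternion.self_mul_star, Quaternion.normSq_eq_norm_mul_self, norm_eq_of_mem_sphere]
  simp

theorem star_mul_coe (q : S3) : star (q : ℍ[ℝ]) * (q : ℍ[ℝ]) = 1 := by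
  rw [Quaternion.star_mul_self, Quaternion.normSq_eq_norm_mul_self, norm_eq_of_mem_sphere]
  simp

open Classical in
/-- The direction of a quaternion, with junk value `1` at `0`. -/
noncomputable def normalize (q : ℍ[ℝ]) : S3 :=
  if hq : q = 0 then 1 else ⟨‖q‖⁻¹ • q, by simp [norm_smul, hq]⟩

theorem coe_normalize {q : ℍ[ℝ]} (hq : q ≠ 0) : (normalize q : ℍ[ℝ]) = ‖q‖⁻¹ • q := by
  simp [normalize, hq]

theorem normalize_smul_coe {r : ℝ} (hr : 0 < r) (u : S3) : normalize (r • (u : ℍ[ℝ])) = u := by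
  ext1
  rw [coe_normalize (smul_ne_zero hr.ne' (ne_zero_of_mem_unit_sphere u)), norm_smul,
    norm_eq_of_mem_sphere, mul_one, Real.norm_of_nonneg hr.le, inv_smul_smul₀ hr.ne']

theorem normalize_coe (u : S3) : normalize u = u := by
  simpa using normalize_smul_coe one_pos u

theorem normalize_mul_coe {q : ℍ[ℝ]} (hq : q ≠ 0) (u : S3) :
    normalize (q * u) = normalize q * u := by
  ext1
  rw [Metric.unitSphere.coe_mul, coe_normalize hq,
    coe_normalize (mul_ne_zero hq (ne_zero_of_mem_unit_sphere u)), norm_mul,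
    norm_eq_of_mem_sphere, mul_one, smul_mul_assoc]

theorem continuousOn_normalize : ContinuousOn normalize {0}ᶜ := by
  rw [continuousOn_iff_continuous_domRestrict]
  refine continuous_induced_rng.2 ?_
  have h : Continuous fun q : ({0}ᶜ : Set ℍ[ℝ]) => ‖(q : ℍ[ℝ])‖⁻¹ • (q : ℍ[ℝ]) :=
    (Continuous.inv₀ (by fun_prop) fun q => norm_ne_zero_iff.2 q.2).smul continuous_subtype_val
  exact h.congr fun q => (coe_normalize q.2).symm

instance : PathConnectedSpace S3 := by
  refine isPathConnected_iff_pathConnectedSpace.1 (isPathConnected_sphere ?_ 0 zero_le_one)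
  rw [← Module.finrank_eq_rank, Quaternion.finrank_eq_four]
  norm_num

theorem homotopic_one_of_separatesPoints {K D E : Type*} [TopologicalSpace K] [CompactSpace K]
    [NormedAddCommGroup E] [NormedSpace ℝ E] [FiniteDimensional ℝ E] {π : D → K} {ι : D → E}
    (hπ : Function.Surjective π) (hsep : (smoothSubalgebra π ι).SeparatesPoints)
    (hdim : Module.finrank ℝ E ≤ 2) (R : C(K, S3)) : R.Homotopic 1 := by
  let incl : C(S3, ({0}ᶜ : Set ℍ[ℝ])) :=
    ⟨fun u => ⟨u, ne_zero_of_mem_unit_sphere u⟩, by fun_prop⟩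
  let retr : C(({0}ᶜ : Set ℍ[ℝ]), S3) :=
    ⟨fun q => normalize q, continuousOn_iff_continuous_domRestrict.1 continuousOn_normalize⟩
  obtain ⟨u, hu⟩ := (nullhomotopic_of_separatesPoints hπ hsep
    (by rw [Quaternion.finrank_eq_four]; omega) (incl.comp R)).comp_right retr
  have hR : retr.comp (incl.comp R) = R := ContinuousMap.ext fun k => normalize_coe (R k)
  rw [hR] at hu
  obtain ⟨γ⟩ := PathConnectedSpace.joined u (1 : S3)
  exact hu.trans ⟨⟨⟨fun z => γ z.1, by fun_prop⟩, by simp, by simp⟩⟩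

end S3

/-- The identification of `ℝ³` with the purely imaginary quaternions. -/
noncomputable def imQuaternion : EuclideanSpace ℝ (Fin 3) →ₗᵢ[ℝ] ℍ[ℝ] where
  toFun x := ⟨0, x 0, x 1, x 2⟩
  map_add' x y := by
    ext
    exacts [(add_zero 0).symm, rfl, rfl, rfl]
  map_smul' r x := by
    ext
    exacts [(mul_zero r).symm, rfl, rfl, rfl]
  norm_map' x := by
    rw [← sq_eq_sq₀ (norm_nonneg _) (norm_nonneg _), sq, ← Quaternion.normSq_eq_norm_mul_self,
      Quaternion.normSq_def', EuclideanSpace.norm_sq_eq, Fin.sum_univ_three]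
    change (0 : ℝ) ^ 2 + x 0 ^ 2 + x 1 ^ 2 + x 2 ^ 2 = _
    simp

section Coordinates

variable (x : EuclideanSpace ℝ (Fin 3))

@[simp] theorem re_imQuaternion : (imQuaternion x).re = 0 := rfl

@[simp] theorem imI_imQuaternion : (imQuaternion x).imI = x 0 := rfl

@[simp] theorem imJ_imQuaternion : (imQuaternion x).imJ = x 1 := rfl

@[simp] theorem imK_imQuaternion : (imQuaternion x).imK = x 2 := rfl

end Coordinates

/-- The imaginary part of a quaternion, as a vector of `ℝ³`. -/
noncomputable def imPart (q : ℍ[ℝ]) : EuclideanSpace ℝ (Fin 3) := !₂[q.imI, q.imJ, q.imK]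

theorem continuous_imPart : Continuous imPart := by
  refine (PiLp.continuous_toLp 2 _).comp (continuous_pi fun i => ?_)
  fin_cases i
  exacts [Quaternion.continuous_imI, Quaternion.continuous_imJ, Quaternion.continuous_imK]

theorem imQuaternion_imPart {q : ℍ[ℝ]} (hq : q.re = 0) : imQuaternion (imPart q) = q := by
  ext <;> simp [imPart, hq]

theorem re_imQuaternion_mul (x y : EuclideanSpace ℝ (Fin 3)) :
    (imQuaternion y * imQuaternion x).re = -inner ℝ x y := by
  simp only [Quaternion.re_mul, re_imQuaternion, imI_imQuaternion, imJ_imQuaternion,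
    imK_imQuaternion, PiLp.inner_apply, RCLike.inner_apply, Real.ringHom_apply, Fin.sum_univ_three]
  ring

theorem imQuaternion_mul_self (x : S2) : imQuaternion x * imQuaternion x = -1 := by
  have hx : (x : EuclideanSpace ℝ (Fin 3)) 0 ^ 2 + (x : EuclideanSpace ℝ (Fin 3)) 1 ^ 2 +
      (x : EuclideanSpace ℝ (Fin 3)) 2 ^ 2 = 1 := by
    have := EuclideanSpace.norm_sq_eq (x : EuclideanSpace ℝ (Fin 3))
    simpa [Fin.sum_univ_three] using this.symm
  ext <;> simp <;> linarith

theorem re_conj_eq_zero (q : S3) (x : S2) :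
    ((q : ℍ[ℝ]) * imQuaternion x * star (q : ℍ[ℝ])).re = 0 := by
  simp only [Quaternion.re_mul, Quaternion.imI_mul, Quaternion.imJ_mul, Quaternion.imK_mul,
    re_imQuaternion, imI_imQuaternion, imJ_imQuaternion, imK_imQuaternion, Quaternion.re_star,
    Quaternion.imI_star, Quaternion.imJ_star, Quaternion.imK_star]
  ring

/-- The rotation of the sphere by `x ↦ q x q⁻¹`. -/
noncomputable def rotate (q : S3) (x : S2) : S2 :=
  ⟨imPart (q * imQuaternion x * star (q : ℍ[ℝ])), by
    rw [mem_sphere_zero_iff_norm, ← imQuaternion.norm_map,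
      imQuaternion_imPart (re_conj_eq_zero q x), norm_mul, norm_mul, Quaternion.norm_star,
      imQuaternion.norm_map]
    simp⟩

theorem imQuaternion_rotate (q : S3) (x : S2) :
    imQuaternion (rotate q x) = q * imQuaternion x * star (q : ℍ[ℝ]) :=
  imQuaternion_imPart (re_conj_eq_zero q x)

theorem rotate_eq_iff {q : S3} {x y : S2} :
    rotate q x = y ↔ (q : ℍ[ℝ]) * imQuaternion x = imQuaternion y * q := by
  rw [← SetCoe.ext_iff, ← imQuaternion.injective.eq_iff, imQuaternion_rotate]
  constructor <;> intro h
  · rw [← h, mul_assoc _ (star _), S3.star_mul_coe, mul_one]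
  · rw [h, mul_assoc, S3.coe_mul_star, mul_one]

theorem rotate_one (x : S2) : rotate 1 x = x := by simp [rotate_eq_iff]

theorem rotate_mul (q r : S3) (x : S2) : rotate (q * r) x = rotate q (rotate r x) := by
  rw [rotate_eq_iff, imQuaternion_rotate, imQuaternion_rotate, Metric.unitSphere.coe_mul]
  simp only [mul_assoc]
  rw [← mul_assoc (star (q : ℍ[ℝ])), S3.star_mul_coe, one_mul, S3.star_mul_coe, mul_one]

theorem rotate_neg (q : S3) (x : S2) : rotate q (-x) = -rotate q x := by
  rw [rotate_eq_iff, coe_neg_sphere, coe_neg_sphere, map_neg, map_neg, mul_neg, neg_mul,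
    rotate_eq_iff.1 rfl]

theorem continuous_rotate : Continuous fun z : S3 × S2 => rotate z.1 z.2 :=
  (continuous_imPart.comp (by fun_prop)).subtype_mk _

/-- The shortest rotation from `x` to `y` is conjugation by a multiple of `1 - y x`. -/
theorem rotate_normalize {q : ℍ[ℝ]} {x y : S2} {r : ℝ}
    (hq : q = r • (1 - imQuaternion y * imQuaternion x)) (hq0 : q ≠ 0) :
    rotate (S3.normalize q) x = y := by
  rw [rotate_eq_iff, S3.coe_normalize hq0, hq, smul_mul_assoc, mul_smul_comm, smul_mul_assoc,
    mul_smul_comm, sub_mul, mul_sub, mul_assoc, imQuaternion_mul_self, ← mul_assoc,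
    imQuaternion_mul_self]
  congr 2
  noncomm_ring

namespace RP2

/-- The point of the projective plane represented by a point of the sphere. -/
def mk (x : S2) : RP2 := Quot.mk _ x

theorem mk_surjective : Function.Surjective mk := Quot.mk_surjective

theorem mk_neg (x : S2) : mk (-x) = mk x :=
  Quot.sound (by rw [coe_neg_sphere, neg_neg])

theorem mk_eq_mk_iff {x y : S2} : mk x = mk y ↔ y = x ∨ y = -x := by
  refine ⟨fun h => ?_, ?_⟩
  · have hxy := Quot.eqvGen_exact h
    clear h
    induction hxy with
    | rel x y h => exact .inr (Subtype.ext h)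
    | refl x => exact .inl rfl
    | symm x y _ ih => rcases ih with rfl | rfl <;> simp
    | trans x y z _ _ ihxy ihyz =>
      rcases ihxy with rfl | rfl <;> rcases ihyz with rfl | rfl <;> simp
  · rintro (rfl | rfl)
    exacts [rfl, (mk_neg x).symm]

theorem isOpenQuotientMap_mk : IsOpenQuotientMap mk := by
  have hmk : IsQuotientMap mk := isQuotientMap_quot_mk
  refine ⟨hmk.surjective, hmk.continuous, fun U hU => hmk.isOpen_preimage.1 ?_⟩
  convert hU.union (hU.preimage continuous_neg) using 1
  ext y
  refine ⟨?_, ?_⟩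
  · rintro ⟨x, hx, hxy⟩
    rcases mk_eq_mk_iff.1 hxy with rfl | rfl
    exacts [.inl hx, .inr (by simpa using hx)]
  · rintro (hy | hy)
    exacts [⟨y, hy, rfl⟩, ⟨-y, hy, mk_neg y⟩]

noncomputable instance : MulAction S3 RP2 where
  smul q := Quot.map (rotate q) fun x y hxy => by
    rw [show y = -x from Subtype.ext hxy, rotate_neg, coe_neg_sphere]
  one_smul := mk_surjective.forall.2 fun x => congrArg mk (rotate_one x)
  mul_smul q r := mk_surjective.forall.2 fun x => congrArg mk (rotate_mul q r x)

theorem smul_mk (q : S3) (x : S2) : q • mk x = mk (rotate q x) := rfl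

instance : ContinuousSMul S3 RP2 where
  continuous_smul := (IsOpenQuotientMap.id.prodMap isOpenQuotientMap_mk).continuous_comp_iff.1
    (isOpenQuotientMap_mk.continuous.comp continuous_rotate)

/-- The cosine of the angle between two lines. -/
noncomputable def cosAngle : RP2 → RP2 → ℝ :=
  Quot.lift₂ (fun x y => |inner ℝ (x : EuclideanSpace ℝ (Fin 3)) y|)
    (fun x y z h => by rw [h, inner_neg_right, abs_neg])
    (fun x y z h => by rw [h, inner_neg_left, abs_neg])

/-- A quaternion in the direction of the shortest rotation from one line to another, when these are
not orthogonal: with representatives at an acute angle it is a positive multiple of `1 - y x`. -/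
noncomputable def rotor : RP2 → RP2 → ℍ[ℝ] :=
  Quot.lift₂ (fun x y => ((|inner ℝ (x : EuclideanSpace ℝ (Fin 3)) y| : ℝ) : ℍ[ℝ]) -
      inner ℝ (x : EuclideanSpace ℝ (Fin 3)) y • (imQuaternion y * imQuaternion x))
    (fun x y z h => by rw [h]; simp)
    (fun x y z h => by rw [h]; simp)

theorem cosAngle_mk (x y : S2) :
    cosAngle (mk x) (mk y) = |inner ℝ (x : EuclideanSpace ℝ (Fin 3)) y| := rfl

theorem rotor_mk (x y : S2) :
    rotor (mk x) (mk y) = ((|inner ℝ (x : EuclideanSpace ℝ (Fin 3)) y| : ℝ) : ℍ[ℝ]) -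
      inner ℝ (x : EuclideanSpace ℝ (Fin 3)) y • (imQuaternion y * imQuaternion x) := rfl

theorem continuous_cosAngle : Continuous fun z : RP2 × RP2 => cosAngle z.1 z.2 := by
  refine (isOpenQuotientMap_mk.prodMap isOpenQuotientMap_mk).continuous_comp_iff.1 ?_
  exact Continuous.abs (f := fun z : S2 × S2 => inner ℝ (z.1 : EuclideanSpace ℝ (Fin 3)) z.2)
    (by fun_prop)

theorem continuous_rotor : Continuous fun z : RP2 × RP2 => rotor z.1 z.2 := by
  refine (isOpenQuotientMap_mk.prodMap isOpenQuotientMap_mk).continuous_comp_iff.1 ?_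
  have hinner : Continuous fun z : S2 × S2 =>
    inner ℝ (z.1 : EuclideanSpace ℝ (Fin 3)) (z.2 : EuclideanSpace ℝ (Fin 3)) := by fun_prop
  have him := imQuaternion.continuous
  exact (Quaternion.continuous_coe.comp hinner.abs).sub (hinner.smul (by fun_prop))

theorem exists_mk_eq_inner_nonneg (x : S2) (b : RP2) :
    ∃ y, mk y = b ∧ 0 ≤ inner ℝ (x : EuclideanSpace ℝ (Fin 3)) y := by
  obtain ⟨y, rfl⟩ := mk_surjective b
  rcases le_total 0 (inner ℝ (x : EuclideanSpace ℝ (Fin 3)) (y : EuclideanSpace ℝ (Fin 3)))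
    with h | h
  · exact ⟨y, rfl, h⟩
  · exact ⟨-y, mk_neg y, by simpa using h⟩

theorem rotor_ne_zero {a b : RP2} (h : cosAngle a b ≠ 0) : rotor a b ≠ 0 := by
  obtain ⟨x, rfl⟩ := mk_surjective a
  obtain ⟨y, rfl⟩ := mk_surjective b
  rw [cosAngle_mk] at h
  have hre : (rotor (mk x) (mk y)).re = |inner ℝ (x : EuclideanSpace ℝ (Fin 3)) y| +
      inner ℝ (x : EuclideanSpace ℝ (Fin 3)) y ^ 2 := by
    rw [rotor_mk, Quaternion.re_sub, Quaternion.re_smul, re_imQuaternion_mul, Quaternion.re_coe,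
      smul_eq_mul]
    ring
  intro h0
  rw [h0, Quaternion.re_zero] at hre
  nlinarith [abs_pos.2 (abs_ne_zero.1 h)]

theorem normalize_rotor_smul {a b : RP2} (h : cosAngle a b ≠ 0) :
    S3.normalize (rotor a b) • a = b := by
  obtain ⟨x, rfl⟩ := mk_surjective a
  obtain ⟨y, rfl, hy⟩ := exists_mk_eq_inner_nonneg x b
  rw [smul_mk]
  congr 1
  refine rotate_normalize (r := inner ℝ (x : EuclideanSpace ℝ (Fin 3)) y) ?_ (rotor_ne_zero h)
  rw [rotor_mk, abs_of_nonneg hy, smul_sub, ← Quaternion.algebraMap_def,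
    Algebra.algebraMap_eq_smul_one]

theorem cosAngle_self (a : RP2) : cosAngle a a = 1 := by
  obtain ⟨x, rfl⟩ := mk_surjective a
  simp [cosAngle_mk]

theorem normalize_rotor_self (a : RP2) : S3.normalize (rotor a a) = 1 := by
  obtain ⟨x, rfl⟩ := mk_surjective a
  convert S3.normalize_smul_coe two_pos 1 using 2
  rw [rotor_mk, imQuaternion_mul_self, real_inner_self_eq_norm_sq, norm_eq_of_mem_sphere, one_pow,
    abs_one, one_smul, sub_neg_eq_add, Quaternion.coe_one, two_smul, Metric.unitSphere.coe_one]

/-- Transport between non-orthogonal lines by the shortest rotation. -/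
noncomputable def localTransport : LocalTransport S3 RP2 where
  domain := {z | cosAngle z.1 z.2 ≠ 0}
  isOpen_domain := isOpen_ne_fun continuous_cosAngle continuous_const
  diag_mem a := by simp [cosAngle_self]
  transport z := S3.normalize (rotor z.1 z.2)
  continuousOn := S3.continuousOn_normalize.comp continuous_rotor.continuousOn
    fun _ => rotor_ne_zero
  smul_eq := normalize_rotor_smul
  self_eq_one := normalize_rotor_self

instance : MulAction.IsPretransitive S3 RP2 where
  exists_smul_eq := mk_surjective.forall.2 fun x b => by
    obtain ⟨y, rfl, hy⟩ := exists_mk_eq_inner_nonneg x b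
    refine ⟨_, congrArg mk (rotate_normalize (one_smul ℝ _).symm fun h => ?_)⟩
    have hre := congrArg (·.re) h
    simp only [Quaternion.re_sub, Quaternion.re_one, re_imQuaternion_mul, Quaternion.re_zero] at hre
    linarith

end RP2

namespace S3

theorem mem_sphere_iff_normSq {q : ℍ[ℝ]} :
    q ∈ Metric.sphere (0 : ℍ[ℝ]) 1 ↔ Quaternion.normSq q = 1 := by
  rw [mem_sphere_zero_iff_norm, Quaternion.normSq_eq_norm_mul_self, ← sq,
    pow_eq_one_iff_of_nonneg (norm_nonneg q) two_ne_zero]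

/-- The one-parameter subgroup `cos θ + i sin θ` of the unit quaternions. -/
noncomputable def expI (θ : ℝ) : S3 :=
  ⟨Quaternion.ofComplex (Circle.exp θ), mem_sphere_iff_normSq.2 (by
    simp [Quaternion.normSq_def', Complex.exp_ofReal_mul_I_re, Complex.exp_ofReal_mul_I_im])⟩

/-- The quaternion unit `k`. -/
noncomputable def k : S3 :=
  ⟨imQuaternion !₂[0, 0, 1], by
    simp [imQuaternion.norm_map, EuclideanSpace.norm_eq, Fin.sum_univ_three]⟩

section Coordinates

variable (θ : ℝ)

@[simp] theorem re_expI : (expI θ : ℍ[ℝ]).re = Real.cos θ := Complex.exp_ofReal_mul_I_re θ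

@[simp] theorem imI_expI : (expI θ : ℍ[ℝ]).imI = Real.sin θ := Complex.exp_ofReal_mul_I_im θ

@[simp] theorem imJ_expI : (expI θ : ℍ[ℝ]).imJ = 0 := rfl

@[simp] theorem imK_expI : (expI θ : ℍ[ℝ]).imK = 0 := rfl

@[simp] theorem re_k : (k : ℍ[ℝ]).re = 0 := rfl

@[simp] theorem imI_k : (k : ℍ[ℝ]).imI = 0 := rfl

@[simp] theorem imJ_k : (k : ℍ[ℝ]).imJ = 0 := rfl

@[simp] theorem imK_k : (k : ℍ[ℝ]).imK = 1 := rfl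

end Coordinates

@[fun_prop]
theorem continuous_expI : Continuous expI :=
  (Quaternion.ofComplex.toLinearMap.continuous_of_finiteDimensional.comp
    (continuous_subtype_val.comp Circle.exp.continuous)).subtype_mk _

theorem expI_add (a b : ℝ) : expI (a + b) = expI a * expI b := by
  ext1
  simp [expI]

theorem expI_zero : expI 0 = 1 := by
  ext1
  ext <;> simp

theorem expI_neg (a : ℝ) : expI (-a) = (expI a)⁻¹ := by
  rw [eq_inv_iff_mul_eq_one, ← expI_add, neg_add_cancel, expI_zero]

theorem expI_pow (a : ℝ) (n : ℕ) : expI a ^ n = expI (n * a) := by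
  induction n with
  | zero => simp [expI_zero]
  | succ n ih => rw [pow_succ, ih, ← expI_add]; push_cast; ring_nf

theorem expI_mul_k (a : ℝ) : expI a * k = k * expI (-a) := by
  ext1
  ext <;> simp

theorem k_mul_k : k * k = expI Real.pi := by
  ext1
  ext <;> simp

theorem inv_k : k⁻¹ = -k := by
  refine inv_eq_of_mul_eq_one_right (Subtype.ext ?_)
  rw [Metric.unitSphere.coe_mul, coe_neg_sphere, Metric.unitSphere.coe_one]
  ext <;> simp

theorem k_pow_of_even {n : ℕ} (hn : Even n) : k ^ n = expI (n * Real.pi / 2) := by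
  obtain ⟨m, rfl⟩ := hn
  rw [← two_mul, pow_mul, sq, k_mul_k, expI_pow]
  push_cast
  ring_nf

theorem expI_ne_k_mul_expI (a b : ℝ) : expI a ≠ k * expI b := by
  intro h
  have hre := congrArg (fun q : S3 => (q : ℍ[ℝ]).re) h
  have himI := congrArg (fun q : S3 => (q : ℍ[ℝ]).imI) h
  simp only [Metric.unitSphere.coe_mul, Quaternion.re_mul, Quaternion.imI_mul, re_expI, imI_expI,
    imJ_expI, imK_expI, re_k, imI_k, imJ_k, imK_k] at hre himI
  nlinarith [Real.cos_sq_add_sin_sq a]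

theorem expI_eq_expI_iff {a b : ℝ} : expI a = expI b ↔ ∃ m : ℤ, a = b + m * (2 * Real.pi) := by
  rw [← Circle.exp_eq_exp, ← Circle.coe_inj]
  exact Subtype.ext_iff.trans Quaternion.ofComplex.toRingHom.injective.eq_iff

instance : ContractibleSpace I := (convex_Icc (0 : ℝ) 1).contractibleSpace ⟨0, by simp⟩

instance : LocallyPathConnectedSpace I := (convex_Icc (0 : ℝ) 1).locallyPathConnectedSpace

section Lift

variable {Y : Type*} [TopologicalSpace Y]

theorem exists_eq_add_of_expI_eq [ConnectedSpace Y] {f g : Y → ℝ} (hf : Continuous f)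
    (hg : Continuous g) (h : ∀ y, expI (f y) = expI (g y)) :
    ∃ C, expI C = 1 ∧ ∀ y, f y = g y + C := by
  obtain ⟨y₀⟩ := (inferInstance : Nonempty Y)
  have hC : expI (f y₀ - g y₀) = 1 := by rw [sub_eq_add_neg, expI_add, expI_neg, h, mul_inv_cancel]
  refine ⟨_, hC, congrFun (Circle.isCoveringMap_exp.eq_of_comp_eq hf (by fun_prop)
    (funext fun y => ?_) y₀ (by ring))⟩
  rw [Function.comp_apply, Function.comp_apply, Circle.exp_eq_exp, ← expI_eq_expI_iff, expI_add,
    hC, mul_one, h]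

theorem exists_eq_expI [SimplyConnectedSpace Y] [LocallyPathConnectedSpace Y] {n : Y → S3}
    (hn : Continuous n) (hJK : ∀ y, (n y : ℍ[ℝ]).imJ = 0 ∧ (n y : ℍ[ℝ]).imK = 0) :
    ∃ ν : Y → ℝ, Continuous ν ∧ ∀ y, n y = expI (ν y) := by
  have hnorm (y : Y) : (⟨(n y : ℍ[ℝ]).re, (n y : ℍ[ℝ]).imI⟩ : ℂ) ∈ Metric.sphere (0 : ℂ) 1 := by
    have h := mem_sphere_iff_normSq.1 (n y).2
    rw [Quaternion.normSq_def', (hJK y).1, (hJK y).2] at h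
    rw [mem_sphere_zero_iff_norm, ← pow_eq_one_iff_of_nonneg (norm_nonneg _) two_ne_zero,
      Complex.sq_norm, Complex.normSq_mk]
    linarith
  let z : C(Y, Circle) := ⟨fun y => ⟨⟨(n y : ℍ[ℝ]).re, (n y : ℍ[ℝ]).imI⟩, hnorm y⟩, by
    refine (Continuous.subtype_mk ?_ _)
    exact Complex.equivRealProdCLM.symm.continuous.comp
      ((Quaternion.continuous_re.comp (by fun_prop)).prodMk
        (Quaternion.continuous_imI.comp (by fun_prop)))⟩
  obtain ⟨y₀⟩ := (inferInstance : Nonempty Y)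
  obtain ⟨a₀, ha₀⟩ := Circle.exp_surjective (z y₀)
  obtain ⟨ν, ⟨-, hν⟩, -⟩ :=
    Circle.isCoveringMap_exp.existsUnique_continuousMap_lifts z y₀ a₀ ha₀
  refine ⟨ν, ν.continuous, fun y => ?_⟩
  have hy := congrArg (fun w : Circle => (w : ℂ)) (congrFun hν y)
  rw [Function.comp_apply, Circle.coe_exp, Complex.ext_iff, Complex.exp_ofReal_mul_I_re,
    Complex.exp_ofReal_mul_I_im] at hy
  ext1
  ext
  exacts [(re_expI _).trans hy.1 |>.symm, (imI_expI _).trans hy.2 |>.symm, (hJK y).1, (hJK y).2]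

end Lift

end S3

namespace RP2

open S3

/-- The line through `(1, 0, 0)`. -/
noncomputable def basePoint : RP2 :=
  mk ⟨!₂[1, 0, 0], by simp [EuclideanSpace.norm_eq, Fin.sum_univ_three]⟩

theorem smul_basePoint_iff {q : S3} : q • basePoint = basePoint ↔
    ((q : ℍ[ℝ]).imJ = 0 ∧ (q : ℍ[ℝ]).imK = 0) ∨ ((q : ℍ[ℝ]).re = 0 ∧ (q : ℍ[ℝ]).imI = 0) := by
  rw [basePoint, smul_mk, eq_comm, mk_eq_mk_iff, rotate_eq_iff, ← neg_eq_iff_eq_neg,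
    ← rotate_neg, rotate_eq_iff, coe_neg_sphere, map_neg, Quaternion.ext_iff, Quaternion.ext_iff]
  simp [self_eq_neg, neg_eq_self, and_comm]

theorem expI_smul_basePoint (a : ℝ) : expI a • basePoint = basePoint :=
  smul_basePoint_iff.2 (.inl ⟨rfl, rfl⟩)

theorem k_smul_basePoint : k • basePoint = basePoint :=
  smul_basePoint_iff.2 (.inr ⟨rfl, rfl⟩)

theorem exists_eq_expI_or_eq_k_mul_expI {Y : Type*} [TopologicalSpace Y] [SimplyConnectedSpace Y]
    [LocallyPathConnectedSpace Y] {n : Y → S3} (hn : Continuous n)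
    (hstab : ∀ y, n y • basePoint = basePoint) :
    ∃ ν : Y → ℝ, Continuous ν ∧ ((∀ y, n y = expI (ν y)) ∨ ∀ y, n y = k * expI (ν y)) := by
  have hn' : Continuous fun y => (n y : ℍ[ℝ]) := continuous_subtype_val.comp hn
  have hclosed {c d : ℍ[ℝ] → ℝ} (hc : Continuous c) (hd : Continuous d) :
      IsClosed {y | c (n y) = 0 ∧ d (n y) = 0} :=
    (isClosed_eq (hc.comp hn') continuous_const).inter (isClosed_eq (hd.comp hn') continuous_const)
  rcases isPreconnected_iff_subset_of_disjoint_closed.1 isPreconnected_univ _ _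
    (hclosed Quaternion.continuous_imJ Quaternion.continuous_imK)
    (hclosed Quaternion.continuous_re Quaternion.continuous_imI)
    (fun y _ => smul_basePoint_iff.1 (hstab y))
    (Set.eq_empty_of_forall_notMem fun y hy => ne_zero_of_mem_unit_sphere (n y)
      (Quaternion.ext _ _ hy.2.2.1 hy.2.2.2 hy.2.1.1 hy.2.1.2)) with h | h
  · obtain ⟨ν, hν, hnν⟩ := exists_eq_expI hn fun y => h (Set.mem_univ y)
    exact ⟨ν, hν, .inl hnν⟩
  · obtain ⟨ν, hν, hnν⟩ := exists_eq_expI (n := fun y => k⁻¹ * n y) (by fun_prop) fun y => by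
      rw [inv_k, Metric.unitSphere.coe_mul, coe_neg_sphere]
      simp [(h (Set.mem_univ y)).1, (h (Set.mem_univ y)).2]
    exact ⟨ν, hν, .inr fun y => inv_mul_eq_iff_eq_mul.1 (hnν y)⟩

end RP2

namespace Mpq

section Cylinder

variable (p q : ℕ)

/-- The projection of the universal cover of the cylinder to `M_{p,q}`. -/
noncomputable def mk (x : I × ℝ) : Mpq p q := Quot.mk _ (x.1, Circle.exp x.2)

theorem mk_surjective : Function.Surjective (mk p q) :=
  Quot.mk_surjective.comp (Function.surjective_id.prodMap Circle.exp_surjective)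

theorem continuous_mk : Continuous (mk p q) :=
  continuous_quot_mk.comp (by fun_prop)

theorem mk_add_two_pi (t : I) (θ : ℝ) : mk p q (t, θ + 2 * Real.pi) = mk p q (t, θ) :=
  congrArg (fun z => Quot.mk _ (t, z)) (by simp [Circle.exp_add])

theorem mk_zero_add (θ : ℝ) : mk p q (0, θ + 2 * Real.pi / p) = mk p q (0, θ) :=
  (Quot.sound (.inl ⟨rfl, rfl, by rw [add_comm, Circle.exp_add]⟩)).symm

theorem mk_one_add (θ : ℝ) : mk p q (1, θ + 2 * Real.pi / q) = mk p q (1, θ) :=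
  (Quot.sound (.inr ⟨rfl, rfl, by rw [add_comm, Circle.exp_add]⟩)).symm

end Cylinder

instance (p q : ℕ) : CompactSpace (Mpq p q) := Quot.compactSpace

variable {p q : ℕ}

theorem exists_comp_mk_eq {X : Type*} [TopologicalSpace X] {f : I × ℝ → X} (hf : Continuous f)
    (hperiod : ∀ t θ, f (t, θ + 2 * Real.pi) = f (t, θ))
    (hzero : ∀ θ, f (0, θ + 2 * Real.pi / p) = f (0, θ))
    (hone : ∀ θ, f (1, θ + 2 * Real.pi / q) = f (1, θ)) :
    ∃ F : C(Mpq p q, X), ∀ x, F (mk p q x) = f x := by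
  let π : C(I × ℝ, I × Circle) := (ContinuousMap.id I).prodMap Circle.exp
  have hquot : IsQuotientMap π :=
    (IsOpenQuotientMap.id.prodMap ⟨Circle.exp_surjective, Circle.exp.continuous,
      Circle.isCoveringMap_exp.isOpenMap⟩).isQuotientMap
  have hfactors : Function.FactorsThrough f π := fun x y hxy => by
    obtain ⟨ht, hθ⟩ : x.1 = y.1 ∧ Circle.exp x.2 = Circle.exp y.2 := Prod.ext_iff.1 hxy
    obtain ⟨m, hm⟩ := Circle.exp_eq_exp.1 hθ
    rw [show x = (y.1, y.2 + m * (2 * Real.pi)) from Prod.ext ht hm]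
    exact Function.Periodic.int_mul (f := fun θ => f (y.1, θ)) (hperiod y.1) m y.2
  let g : C(I × Circle, X) := hquot.lift ⟨f, hf⟩ hfactors
  have hg (t : I) (θ : ℝ) : g (t, Circle.exp θ) = f (t, θ) :=
    DFunLike.congr_fun (hquot.lift_comp ⟨f, hf⟩ hfactors) (t, θ)
  refine ⟨⟨Quot.lift g ?_, continuous_quot_lift _ g.continuous⟩, fun x => hg x.1 x.2⟩
  rintro ⟨s, z⟩ ⟨t, w⟩ h
  obtain ⟨θ, rfl⟩ := Circle.exp_surjective z
  rcases h with ⟨hs, ht, hw⟩ | ⟨hs, ht, hw⟩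
  · obtain rfl : s = 0 := Subtype.ext hs
    obtain rfl : t = 0 := Subtype.ext ht
    obtain rfl : w = _ := hw
    rw [← Circle.exp_add, add_comm, hg, hg, hzero]
  · obtain rfl : s = 1 := Subtype.ext hs
    obtain rfl : t = 1 := Subtype.ext ht
    obtain rfl : w = _ := hw
    rw [← Circle.exp_add, add_comm, hg, hg, hone]

theorem exists_lift (F : C(Mpq p q, RP2)) :
    ∃ g : I × ℝ → S3, Continuous g ∧ ∀ x, g x • RP2.basePoint = F (mk p q x) := by
  obtain ⟨R, hR, hRF⟩ := RP2.localTransport.exists_smul_eq_cylinder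
    (F := fun z : I × Circle => F (Quot.mk _ z)) (F.continuous.comp continuous_quot_mk)
  obtain ⟨c, hc⟩ := MulAction.exists_smul_eq S3 RP2.basePoint (F (Quot.mk _ (0, 1)))
  refine ⟨fun x => R x * c, by fun_prop, fun x => ?_⟩
  rw [mul_smul, hc]
  exact hRF x.1 x.2

/-- The algebra of functions on `M_{p,q}` that are continuously differentiable in the coordinates
of the strip `[0, 1] × ℝ`. -/
noncomputable abbrev smoothFunctions (p q : ℕ) : Subalgebra ℝ C(Mpq p q, ℝ) :=
  smoothSubalgebra (mk p q) fun x : I × ℝ => ((x.1 : ℝ), x.2)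

section Separation

variable [NeZero p] [NeZero q]

theorem exists_mem_smoothFunctions {w : ℝ → ℝ} (hw : ContDiff ℝ 1 w) {n : ℕ}
    (hzero : w 0 = 0 ∨ p ∣ n) (hone : w 1 = 0 ∨ q ∣ n) (c : ℝ) :
    ∃ f ∈ smoothFunctions p q, ∀ t θ, f (mk p q (t, θ)) = w t * Real.cos (n * θ - c) := by
  have hend {r m : ℕ} [NeZero r] (h : r ∣ m) (θ : ℝ) :
      Real.cos (m * (θ + 2 * Real.pi / r) - c) = Real.cos (m * θ - c) := by
    obtain ⟨d, rfl⟩ := h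
    have hr : (r : ℝ) ≠ 0 := NeZero.ne _
    rw [← Real.cos_add_nat_mul_two_pi (↑(r * d) * θ - c) d]
    congr 1
    push_cast
    field_simp
    ring
  obtain ⟨f, hf⟩ := exists_comp_mk_eq (p := p) (q := q)
    (f := fun x => w x.1 * Real.cos (n * x.2 - c))
    ((hw.continuous.comp (by fun_prop)).mul (by fun_prop)) (fun t θ => by
      simpa using congrArg (w t * ·) (hend (r := 1) (one_dvd n) θ))
    (fun θ => by rcases hzero with h | h <;> simp [h, hend])
    (fun θ => by rcases hone with h | h <;> simp [h, hend])
  refine ⟨f, ⟨fun z => w z.1 * Real.cos (n * z.2 - c), ?_, hf⟩, fun t θ => hf (t, θ)⟩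
  exact (hw.comp contDiff_fst).mul (Real.contDiff_cos.comp (by fun_prop))

theorem separatesPoints_smoothFunctions : (smoothFunctions p q).SeparatesPoints := by
  intro m m' hne
  obtain ⟨⟨t, θ⟩, rfl⟩ := mk_surjective p q m
  obtain ⟨⟨t', θ'⟩, rfl⟩ := mk_surjective p q m'
  contrapose! hne
  have hagree {w : ℝ → ℝ} (hw : ContDiff ℝ 1 w) {n : ℕ} (hzero : w 0 = 0 ∨ p ∣ n)
      (hone : w 1 = 0 ∨ q ∣ n) (c : ℝ) :
      w t * Real.cos (n * θ - c) = w t' * Real.cos (n * θ' - c) := by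
    obtain ⟨f, hf, hft⟩ := exists_mem_smoothFunctions hw hzero hone c
    rw [← hft, ← hft]
    exact hne _ ⟨f, hf, rfl⟩
  obtain rfl : t = t' := Subtype.ext (by
    simpa using hagree contDiff_id (n := 0) (.inr (dvd_zero p)) (.inr (dvd_zero q)) 0)
  have hangle {w : ℝ → ℝ} (hw : ContDiff ℝ 1 w) {n : ℕ} [NeZero n] (hzero : w 0 = 0 ∨ p ∣ n)
      (hone : w 1 = 0 ∨ q ∣ n) (hwt : w t ≠ 0) : ∃ d : ℤ, θ = θ' + d * (2 * Real.pi / n) := by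
    have hcos := mul_left_cancel₀ hwt (hagree hw hzero hone 0)
    have hsin := mul_left_cancel₀ hwt (hagree hw hzero hone (Real.pi / 2))
    rw [sub_zero, sub_zero] at hcos
    rw [Real.cos_sub_pi_div_two, Real.cos_sub_pi_div_two] at hsin
    obtain ⟨d, hd⟩ :=
      Real.Angle.angle_eq_iff_two_pi_dvd_sub.1 (Real.Angle.cos_sin_inj hcos hsin)
    have hn : (n : ℝ) ≠ 0 := NeZero.ne _
    exact ⟨d, mul_left_cancel₀ hn (by field_simp; linarith)⟩
  rcases eq_or_ne t 0 with rfl | ht0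
  · obtain ⟨d, rfl⟩ := hangle (w := fun s => 1 - s) (n := p) (by fun_prop) (.inr dvd_rfl)
      (.inl (sub_self 1)) (by simp)
    exact Function.Periodic.int_mul (f := fun θ => mk p q (0, θ)) (mk_zero_add p q) d θ'
  rcases eq_or_ne t 1 with rfl | ht1
  · obtain ⟨d, rfl⟩ := hangle (w := id) (n := q) contDiff_id (.inl rfl) (.inr dvd_rfl) (by simp)
    exact Function.Periodic.int_mul (f := fun θ => mk p q (1, θ)) (mk_one_add p q) d θ'
  · obtain ⟨d, rfl⟩ := hangle (w := fun s => s * (1 - s)) (n := 1) (by fun_prop) (.inl (by simp))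
      (.inl (by simp)) (mul_ne_zero (Subtype.coe_ne_coe.2 ht0)
        (sub_ne_zero.2 (Subtype.coe_ne_coe.2 ht1.symm)))
    simpa using Function.Periodic.int_mul (f := fun θ => mk p q (t, θ)) (mk_add_two_pi p q t) d θ'

theorem homotopic_iff_exists_smul {F F' : C(Mpq p q, RP2)} :
    F.Homotopic F' ↔ ∃ R : C(Mpq p q, S3), ∀ m, R m • F m = F' m := by
  refine ⟨RP2.localTransport.exists_smul_eq_of_homotopic, fun ⟨R, hR⟩ => ?_⟩
  obtain ⟨H⟩ := S3.homotopic_one_of_separatesPoints (mk_surjective p q)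
    separatesPoints_smoothFunctions (by simp) R
  have hF' : F' = ⟨fun m => R m • F m, by fun_prop⟩ := ContinuousMap.ext fun m => (hR m).symm
  exact .symm ⟨{ toFun := fun x => H x • F x.2
                 map_zero_left := by simp [hF']
                 map_one_left := by simp }⟩

end Separation

open S3 RP2

section Monodromy

variable {F F' : C(Mpq p q, RP2)} {u v u' v' : S3} {h h' : I × ℝ → S3}

/-- A map `h` from the strip `[0, 1] × ℝ` to `S³` that is equivariant with holonomy `u` along the
exceptional circle `t = 0`, holonomy `v` along the exceptional circle `t = 1`, and holonomy `u ^ p`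
along the regular circles. -/
structure IsEquivariant (p q : ℕ) (u v : S3) (h : I × ℝ → S3) : Prop where
  continuous : Continuous h
  period : ∀ t θ, h (t, θ + 2 * Real.pi) = h (t, θ) * u ^ p
  zero_add : ∀ θ, h (0, θ + 2 * Real.pi / p) = h (0, θ) * u
  one_add : ∀ θ, h (1, θ + 2 * Real.pi / q) = h (1, θ) * v

/-- The map `h` on the strip lifts `F` through the orbit map of the base point of `ℝP²`. -/
def IsLift (F : C(Mpq p q, RP2)) (h : I × ℝ → S3) : Prop :=
  ∀ x, h x • basePoint = F (mk p q x)

/-- The map `F` has an equivariant lift with holonomies `u` and `v` along the two exceptional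
circles of `M_{p,q}`. -/
def HasMonodromy (F : C(Mpq p q, RP2)) (u v : S3) : Prop :=
  ∃ h, IsEquivariant p q u v h ∧ IsLift F h

theorem IsEquivariant.pow_eq_pow [NeZero q] (hh : IsEquivariant p q u v h) : u ^ p = v ^ q := by
  have hq : (q : ℝ) ≠ 0 := NeZero.ne _
  have hiter := map_add_nat_mul (g := fun θ => h (1, θ)) hh.one_add q 0
  rw [mul_div_cancel₀ _ hq, hh.period] at hiter
  exact mul_left_cancel hiter

theorem IsEquivariant.mul {n : I × ℝ → S3} (hh : IsEquivariant p q u v h) (hn : Continuous n)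
    (hperiod : ∀ t θ, u ^ p * n (t, θ + 2 * Real.pi) = n (t, θ) * u' ^ p)
    (hzero : ∀ θ, u * n (0, θ + 2 * Real.pi / p) = n (0, θ) * u')
    (hone : ∀ θ, v * n (1, θ + 2 * Real.pi / q) = n (1, θ) * v') :
    IsEquivariant p q u' v' fun x => h x * n x where
  continuous := hh.continuous.mul hn
  period t θ := by rw [hh.period, mul_assoc, hperiod, mul_assoc]
  zero_add θ := by rw [hh.zero_add, mul_assoc, hzero, mul_assoc]
  one_add θ := by rw [hh.one_add, mul_assoc, hone, mul_assoc]

theorem IsEquivariant.mul_k {a : ℝ} (hh : IsEquivariant p q k (expI a) h) :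
    IsEquivariant p q k (expI (-a)) fun x => h x * k :=
  hh.mul continuous_const (fun _ _ => (pow_mul_comm' k p)) (fun _ => rfl)
    fun _ => expI_mul_k a

theorem IsLift.mul {n : I × ℝ → S3} (hh : IsLift F h) (hn : ∀ x, n x • basePoint = basePoint) :
    IsLift F fun x => h x * n x := fun x => by
  rw [mul_smul, hn, hh]

theorem IsLift.inv_mul_smul_basePoint (hh : IsLift F h) (hh' : IsLift F h') (x : I × ℝ) :
    ((h x)⁻¹ * h' x) • basePoint = basePoint := by
  rw [mul_smul, hh', ← hh, inv_smul_smul]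

theorem IsLift.exists_eq_mul_expI (hh : IsLift F h) (hh' : IsLift F h') (hcont : Continuous h)
    (hcont' : Continuous h') : ∃ ν : I × ℝ → ℝ, Continuous ν ∧
      ((∀ x, h' x = h x * expI (ν x)) ∨ ∀ x, h' x = h x * k * expI (ν x)) := by
  obtain ⟨ν, hν, hcase⟩ := exists_eq_expI_or_eq_k_mul_expI (hcont.inv.mul hcont')
    (hh.inv_mul_smul_basePoint hh')
  exact ⟨ν, hν, hcase.imp (fun H x => inv_mul_eq_iff_eq_mul.1 (H x))
    fun H x => by rw [mul_assoc]; exact inv_mul_eq_iff_eq_mul.1 (H x)⟩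

theorem HasMonodromy.homotopic [NeZero p] [NeZero q] (hF : HasMonodromy F u v)
    (hF' : HasMonodromy F' u v) : F.Homotopic F' := by
  obtain ⟨h, hh, hlift⟩ := hF
  obtain ⟨h', hh', hlift'⟩ := hF'
  obtain ⟨R, hR⟩ := exists_comp_mk_eq (p := p) (q := q) (f := fun x => h' x * (h x)⁻¹)
    (hh'.continuous.mul hh.continuous.inv)
    (fun t θ => by rw [hh.period, hh'.period, mul_inv_rev, mul_assoc, mul_inv_cancel_left])
    (fun θ => by rw [hh.zero_add, hh'.zero_add, mul_inv_rev, mul_assoc, mul_inv_cancel_left])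
    (fun θ => by rw [hh.one_add, hh'.one_add, mul_inv_rev, mul_assoc, mul_inv_cancel_left])
  refine homotopic_iff_exists_smul.2 ⟨R, fun m => ?_⟩
  obtain ⟨x, rfl⟩ := mk_surjective p q m
  rw [hR, ← hlift, ← hlift', smul_smul, inv_mul_cancel_right]

theorem HasMonodromy.of_homotopic [NeZero p] [NeZero q] (hF : HasMonodromy F u v)
    (hhom : F.Homotopic F') : HasMonodromy F' u v := by
  obtain ⟨h, hh, hlift⟩ := hF
  obtain ⟨R, hR⟩ := homotopic_iff_exists_smul.1 hhom
  refine ⟨fun x => R (mk p q x) * h x, ⟨?_, fun t θ => ?_, fun θ => ?_, fun θ => ?_⟩, fun x => ?_⟩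
  · exact (R.continuous.comp (continuous_mk p q)).mul hh.continuous
  · rw [mk_add_two_pi, hh.period, mul_assoc]
  · rw [mk_zero_add, hh.zero_add, mul_assoc]
  · rw [mk_one_add, hh.one_add, mul_assoc]
  · rw [mul_smul, hlift, hR]

theorem HasMonodromy.neg {a : ℝ} (hF : HasMonodromy F k (expI a)) :
    HasMonodromy F k (expI (-a)) :=
  let ⟨_, hh, hlift⟩ := hF
  ⟨_, hh.mul_k, hlift.mul fun _ => k_smul_basePoint⟩

theorem IsEquivariant.exists_hasMonodromy (hh : IsEquivariant p q u v h)
    (hu : u • basePoint = basePoint) (hv : v • basePoint = basePoint) :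
    ∃ F : C(Mpq p q, RP2), HasMonodromy F u v := by
  have hup : u ^ p • basePoint = basePoint := by
    rw [← MulAction.mem_stabilizer_iff] at hu ⊢
    exact pow_mem hu p
  have hcont := hh.continuous
  obtain ⟨F, hF⟩ := exists_comp_mk_eq (p := p) (q := q) (f := fun x => h x • basePoint)
    (by fun_prop)
    (fun t θ => by rw [hh.period, mul_smul, hup])
    (fun θ => by rw [hh.zero_add, mul_smul, hu])
    (fun θ => by rw [hh.one_add, mul_smul, hv])
  exact ⟨F, h, hh, fun x => (hF x).symm⟩

end Monodromy

section Normalization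

section Gauge

variable {g : ℝ → S3} {T : ℝ}

theorem exists_gauge (hT : 0 < T) (hg : Continuous g)
    (hstab : ∀ θ, ((g θ)⁻¹ * g (θ + T)) • basePoint = basePoint) :
    ∃ f : ℝ → ℝ, Continuous f ∧ ∃ κ : S3, (κ = 1 ∨ κ = k) ∧
      ∀ θ, g (θ + T) * expI (f (θ + T)) = g θ * expI (f θ) * κ := by
  obtain ⟨ν, hν, hcase⟩ := exists_eq_expI_or_eq_k_mul_expI
    (n := fun θ => (g θ)⁻¹ * g (θ + T)) (by fun_prop) hstab
  have hsolve {s : ℝ} (hs : s ≠ 0) :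
      ∃ f : ℝ → ℝ, Continuous f ∧ ∀ θ, ν θ + f (θ + T) = s * f θ := by
    obtain ⟨φ, hφ, hsol, -⟩ := DifferenceEquation.exists_solution hT hs
      (a := fun x : Unit × ℝ => -ν x.2) (by fun_prop)
    exact ⟨fun θ => φ ((), θ), by fun_prop, fun θ => by linear_combination hsol () θ⟩
  rcases hcase with H | H
  · obtain ⟨f, hf, hfT⟩ := hsolve one_ne_zero
    refine ⟨f, hf, 1, .inl rfl, fun θ => ?_⟩
    rw [inv_mul_eq_iff_eq_mul.1 (H θ), mul_assoc, ← expI_add, hfT, one_mul, mul_one]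
  · obtain ⟨f, hf, hfT⟩ := hsolve (neg_ne_zero.2 one_ne_zero)
    refine ⟨f, hf, k, .inr rfl, fun θ => ?_⟩
    rw [inv_mul_eq_iff_eq_mul.1 (H θ), mul_assoc, mul_assoc, ← expI_add, hfT, neg_one_mul,
      mul_assoc, expI_mul_k]

theorem exists_add_eq_add_const {f η : ℝ → ℝ} (hf : Continuous f) (hη : Continuous η) {κ : S3}
    {m : ℕ} (hgauge : ∀ θ, g (θ + T) * expI (f (θ + T)) = g θ * expI (f θ) * κ)
    (hgη : ∀ θ, g (θ + m * T) = g θ * expI (η θ)) :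
    ∃ A, expI A = κ ^ m ∧ ∀ θ, η θ + f (θ + m * T) = f θ + A := by
  have hexp (θ : ℝ) : expI (η θ + f (θ + m * T) - f θ) = κ ^ m := by
    have hiter := map_add_nat_mul (g := fun θ => g θ * expI (f θ)) hgauge m θ
    rw [hgη, mul_assoc, mul_assoc, mul_left_cancel_iff, ← expI_add] at hiter
    rw [sub_eq_neg_add, expI_add, hiter, ← mul_assoc, ← expI_add, neg_add_cancel, expI_zero,
      one_mul]
  obtain ⟨C, hC, hconst⟩ := exists_eq_add_of_expI_eq
    (f := fun θ => η θ + f (θ + m * T) - f θ) (g := fun _ => η 0 + f (0 + m * T) - f 0)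
    (by fun_prop) continuous_const fun θ => (hexp θ).trans (hexp 0).symm
  refine ⟨η 0 + f (0 + m * T) - f 0 + C, ?_, fun θ => ?_⟩
  · rw [expI_add, hexp, hC, mul_one]
  · linarith [hconst θ]

end Gauge

/-- Interpolate linearly in `t`; the defect vanishes at both ends, so that it can be removed by
solving a difference equation. -/
theorem exists_extension {η : I × ℝ → ℝ} (hη : Continuous η) {f₀ f₁ : ℝ → ℝ} (hf₀ : Continuous f₀)
    (hf₁ : Continuous f₁) {A T : ℝ} (hT : 0 < T)
    (hzero : ∀ θ, η (0, θ) + f₀ (θ + T) = f₀ θ + A)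
    (hone : ∀ θ, η (1, θ) + f₁ (θ + T) = f₁ θ + A) :
    ∃ φ : I × ℝ → ℝ, Continuous φ ∧ (∀ θ, φ (0, θ) = f₀ θ) ∧ (∀ θ, φ (1, θ) = f₁ θ) ∧
      ∀ t θ, η (t, θ) + φ (t, θ + T) = φ (t, θ) + A := by
  let f (x : I × ℝ) : ℝ := (1 - x.1) * f₀ x.2 + x.1 * f₁ x.2
  have hf : Continuous f := by fun_prop
  obtain ⟨ψ, hψ, hperiod, hvanish⟩ := DifferenceEquation.exists_solution hT one_ne_zero
    (a := fun x => A - η x - (f (x.1, x.2 + T) - f x)) (by fun_prop)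
  have hf_zero (θ : ℝ) : f (0, θ) = f₀ θ := by simp [f]
  have hf_one (θ : ℝ) : f (1, θ) = f₁ θ := by simp [f]
  refine ⟨fun x => f x + ψ x, hf.add hψ, fun θ => ?_, fun θ => ?_, fun t θ => ?_⟩
  · beta_reduce
    rw [hvanish 0 fun θ => by rw [hf_zero, hf_zero]; linarith [hzero θ], hf_zero, add_zero]
  · beta_reduce
    rw [hvanish 1 fun θ => by rw [hf_one, hf_one]; linarith [hone θ], hf_one, add_zero]
  · beta_reduce
    rw [hperiod]
    ring

theorem exists_gauge_of_odd {g : ℝ → S3} {T : ℝ} {η : ℝ → ℝ} (hT : 0 < T) (hg : Continuous g)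
    (hη : Continuous η) (hstab : ∀ θ, ((g θ)⁻¹ * g (θ + T)) • basePoint = basePoint) {m : ℕ}
    (hm : Odd m) (hgη : ∀ θ, g (θ + m * T) = g θ * expI (η θ)) (A : ℝ) :
    ∃ f : ℝ → ℝ, Continuous f ∧ (∀ θ, η θ + f (θ + m * T) = f θ + A) ∧
      ∃ β, ∀ θ, g (θ + T) * expI (f (θ + T)) = g θ * expI (f θ) * expI β := by
  obtain ⟨f, hf, κ, hκ, hgauge⟩ := exists_gauge hT hg hstab
  obtain ⟨B, hB, hfB⟩ := exists_add_eq_add_const hf hη hgauge hgη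
  obtain rfl : κ = 1 := hκ.resolve_right fun hk => by
    obtain ⟨l, rfl⟩ := hm
    rw [hk, pow_succ', k_pow_of_even (even_two_mul l)] at hB
    exact expI_ne_k_mul_expI _ _ hB
  have hmT : (m : ℝ) * T ≠ 0 := mul_ne_zero (Nat.cast_ne_zero.2 hm.pos.ne') hT.ne'
  refine ⟨fun θ => f θ + (A - B) / (m * T) * θ, by fun_prop, fun θ => ?_,
    (A - B) / (m * T) * T, fun θ => ?_⟩
  · linear_combination hfB θ + div_mul_cancel₀ (A - B) hmT
  · rw [expI_add, ← mul_assoc, hgauge, mul_one, expI_add, mul_add, expI_add]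
    simp only [mul_assoc]

theorem exists_eq_mul_expI {g : I × ℝ → S3} {f : ℝ → ℝ} {κ : S3} {T : ℝ} {m : ℕ}
    (hg : Continuous g) (hm : Even m) (hκ : κ = 1 ∨ κ = k)
    (hstab : ∀ x, ((g x)⁻¹ * g (x.1, x.2 + m * T)) • basePoint = basePoint)
    (hgauge : ∀ θ, g (0, θ + T) * expI (f (θ + T)) = g (0, θ) * expI (f θ) * κ) :
    ∃ η : I × ℝ → ℝ, Continuous η ∧ ∀ t θ, g (t, θ + m * T) = g (t, θ) * expI (η (t, θ)) := by
  obtain ⟨η, hη, H | H⟩ := exists_eq_expI_or_eq_k_mul_expI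
    (n := fun x => (g x)⁻¹ * g (x.1, x.2 + m * T)) (by fun_prop) hstab
  · exact ⟨η, hη, fun t θ => inv_mul_eq_iff_eq_mul.1 (H (t, θ))⟩
  · obtain ⟨A, hA⟩ : ∃ A, κ ^ m = expI A := by
      rcases hκ with rfl | rfl
      · exact ⟨0, by rw [one_pow, expI_zero]⟩
      · exact ⟨_, k_pow_of_even hm⟩
    have hiter := map_add_nat_mul (g := fun θ => g (0, θ) * expI (f θ)) hgauge m 0
    rw [inv_mul_eq_iff_eq_mul.1 (H (0, 0)), hA, mul_assoc, mul_assoc, mul_assoc,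
      mul_left_cancel_iff, ← expI_add, ← expI_add] at hiter
    exact absurd hiter.symm (expI_ne_k_mul_expI _ _)

variable [NeZero p] [NeZero q]

theorem exists_hasMonodromy_expI (hp : Even p) (hq : Odd q) (F : C(Mpq p q, RP2)) :
    ∃ κ β, (κ = 1 ∨ κ = k) ∧ HasMonodromy F κ (expI β) := by
  obtain ⟨g, hg, hlift⟩ := exists_lift F
  have hp0 : (0 : ℝ) < p := Nat.cast_pos.2 (NeZero.pos p)
  have hq0 : (0 : ℝ) < q := Nat.cast_pos.2 (NeZero.pos q)
  have hpT : p * (2 * Real.pi / p) = 2 * Real.pi := mul_div_cancel₀ _ hp0.ne'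
  have hqT : q * (2 * Real.pi / q) = 2 * Real.pi := mul_div_cancel₀ _ hq0.ne'
  have hstab {x y : I × ℝ} (hxy : mk p q y = mk p q x) :
      ((g x)⁻¹ * g y) • basePoint = basePoint := by
    rw [mul_smul, hlift, hxy, ← hlift, inv_smul_smul]
  obtain ⟨f₀, hf₀, κ, hκ, hgauge₀⟩ := exists_gauge (g := fun θ => g (0, θ))
    (by positivity) (by fun_prop) fun θ => hstab (mk_zero_add p q θ)
  obtain ⟨η, hη, hgη⟩ := exists_eq_mul_expI (T := 2 * Real.pi / p) hg hp hκ
    (fun x => by rw [hpT]; exact hstab (mk_add_two_pi p q x.1 x.2)) hgauge₀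
  rw [hpT] at hgη
  obtain ⟨A, hA, hf₀A⟩ := exists_add_eq_add_const (g := fun θ => g (0, θ)) hf₀
    (η := fun θ => η (0, θ)) (T := 2 * Real.pi / p) (m := p) (by fun_prop) hgauge₀
    (by simpa only [hpT] using hgη 0)
  obtain ⟨f₁, hf₁, hf₁A, β, hgauge₁⟩ := exists_gauge_of_odd (g := fun θ => g (1, θ))
    (η := fun θ => η (1, θ)) (T := 2 * Real.pi / q) (by positivity) (by fun_prop) (by fun_prop)
    (fun θ => hstab (mk_one_add p q θ)) hq (by simpa only [hqT] using hgη 1) A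
  rw [hpT] at hf₀A
  rw [hqT] at hf₁A
  obtain ⟨φ, hφ, hφ₀, hφ₁, hφA⟩ := exists_extension hη hf₀ hf₁ Real.two_pi_pos hf₀A hf₁A
  refine ⟨κ, β, hκ, fun x => g x * expI (φ x), ⟨by fun_prop, fun t θ => ?_, fun θ => ?_,
    fun θ => ?_⟩, IsLift.mul hlift fun _ => expI_smul_basePoint _⟩
  · rw [hgη, mul_assoc, ← expI_add, hφA, expI_add, hA, mul_assoc]
  · simpa only [hφ₀] using hgauge₀ θ
  · simpa only [hφ₁] using hgauge₁ θ

end Normalization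

section Invariants

variable {F : C(Mpq p q, RP2)} {h h' : I × ℝ → S3}

theorem HasMonodromy.one_one [NeZero p] [NeZero q] (hpq : p.Coprime q) {β : ℝ}
    (hF : HasMonodromy F 1 (expI β)) : HasMonodromy F 1 1 := by
  obtain ⟨h, hh, hlift⟩ := hF
  have hp0 : (p : ℝ) ≠ 0 := NeZero.ne _
  have hq0 : (q : ℝ) ≠ 0 := NeZero.ne _
  obtain ⟨s, hs⟩ : ∃ s : ℤ, q * β = s * (2 * Real.pi) := by
    have hpow := hh.pow_eq_pow
    rw [one_pow, expI_pow, ← expI_zero, eq_comm, expI_eq_expI_iff] at hpow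
    simpa only [zero_add] using hpow
  have hbezout : (s : ℝ) = p * (s * p.gcdA q) + q * (s * p.gcdB q) := by
    have hgcd := p.gcd_eq_gcd_ab q
    rw [hpq.gcd_eq_one] at hgcd
    exact_mod_cast by linear_combination s * hgcd
  have hlinear (m : ℤ) (θ : ℝ) {T : ℝ} (hT : p * T * (s * p.gcdA q) = m * (2 * Real.pi)) :
      expI (-(p * (s * p.gcdA q)) * (θ + T)) = expI (-(p * (s * p.gcdA q)) * θ) :=
    expI_eq_expI_iff.2 ⟨-m, by push_cast; linear_combination -hT⟩
  refine ⟨_, hh.mul (n := fun x => expI (-(p * (s * p.gcdA q)) * x.2)) (by fun_prop)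
    (fun t θ => ?_) (fun θ => ?_) fun θ => ?_, hlift.mul fun _ => expI_smul_basePoint _⟩
  · rw [one_pow, one_mul, mul_one, hlinear (p * (s * p.gcdA q)) θ (by push_cast; ring)]
  · rw [one_mul, mul_one, hlinear (s * p.gcdA q) θ (by push_cast; field_simp)]
  · rw [mul_one, ← expI_add, expI_eq_expI_iff]
    refine ⟨s * p.gcdB q, mul_left_cancel₀ hq0 ?_⟩
    push_cast
    field_simp
    linear_combination hs + 2 * Real.pi * hbezout

theorem HasMonodromy.not_one_and_k {v v' : S3} (hF : HasMonodromy F 1 v) :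
    ¬HasMonodromy F k v' := by
  rintro ⟨h', hh', hlift'⟩
  obtain ⟨h, hh, hlift⟩ := hF
  obtain ⟨ν, -, H | H⟩ := hlift.exists_eq_mul_expI hlift' hh.continuous hh'.continuous
  all_goals
    have hzero := hh'.zero_add 0
    rw [H, H, hh.zero_add, mul_one] at hzero
  · rw [mul_assoc, mul_left_cancel_iff, expI_mul_k] at hzero
    exact expI_ne_k_mul_expI _ _ hzero
  · rw [mul_assoc, mul_assoc, mul_assoc, mul_left_cancel_iff, mul_left_cancel_iff, expI_mul_k]
      at hzero
    exact expI_ne_k_mul_expI _ _ hzero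

section Angle

variable {a b : ℝ} {φ : I × ℝ → ℝ}

theorem angle_periodic_zero [NeZero p] (hp : Even p) (hh : IsEquivariant p q k (expI a) h)
    (hh' : IsEquivariant p q k (expI b) fun x => h x * expI (φ x)) (hφ : Continuous φ) (θ : ℝ) :
    φ (0, θ + 2 * Real.pi) = φ (0, θ) := by
  have hexp (θ : ℝ) : expI (φ (0, θ + 2 * Real.pi / p)) = expI (-φ (0, θ)) := by
    have hzero := hh'.zero_add θ
    rw [hh.zero_add, mul_assoc, mul_assoc, mul_left_cancel_iff, expI_mul_k] at hzero
    exact mul_left_cancel hzero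
  obtain ⟨C, -, hC⟩ := exists_eq_add_of_expI_eq (by fun_prop) (by fun_prop) hexp
  have hdouble : Function.Periodic (fun θ => φ (0, θ)) (2 * (2 * Real.pi / p)) := fun θ => by
    beta_reduce
    rw [two_mul, ← add_assoc, hC, hC]
    ring
  obtain ⟨l, rfl⟩ := hp.two_dvd
  have hl : (l : ℝ) ≠ 0 := fun hl => NeZero.ne (2 * l) (by simpa using hl)
  rw [show 2 * Real.pi = l * (2 * (2 * Real.pi / ↑(2 * l))) by push_cast; field_simp]
  exact hdouble.nat_mul l θ

theorem angle_periodic [NeZero p] (hp : Even p) (hh : IsEquivariant p q k (expI a) h)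
    (hh' : IsEquivariant p q k (expI b) fun x => h x * expI (φ x)) (hφ : Continuous φ)
    (t : I) (θ : ℝ) : φ (t, θ + 2 * Real.pi) = φ (t, θ) := by
  have hexp (x : I × ℝ) : expI (φ (x.1, x.2 + 2 * Real.pi)) = expI (φ x) := by
    have hperiod := hh'.period x.1 x.2
    rw [hh.period, k_pow_of_even hp, mul_assoc, mul_assoc, mul_left_cancel_iff, ← expI_add,
      ← expI_add, add_comm, expI_add, expI_add] at hperiod
    exact mul_right_cancel hperiod
  obtain ⟨C, -, hC⟩ := exists_eq_add_of_expI_eq (by fun_prop) hφ hexp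
  have hC0 : C = 0 := by
    have h0 := hC (0, 0)
    rw [angle_periodic_zero hp hh hh' hφ] at h0
    exact left_eq_add.1 h0
  rw [hC (t, θ), hC0, add_zero]

theorem IsEquivariant.expI_eq_expI [NeZero p] [NeZero q] (hp : Even p)
    (hh : IsEquivariant p q k (expI a) h)
    (hh' : IsEquivariant p q k (expI b) fun x => h x * expI (φ x)) (hφ : Continuous φ) :
    expI a = expI b := by
  have hexp (θ : ℝ) : expI (φ (1, θ + 2 * Real.pi / q)) = expI (φ (1, θ) + (b - a)) := by
    have hone := hh'.one_add θ
    rw [hh.one_add, mul_assoc, mul_assoc, mul_left_cancel_iff, ← expI_add, ← expI_add] at hone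
    rw [← add_sub_assoc, sub_eq_neg_add, expI_add, ← hone, ← expI_add, neg_add_cancel_left]
  obtain ⟨C, hCexp, hC⟩ := exists_eq_add_of_expI_eq (by fun_prop) (by fun_prop) hexp
  have hq0 : (q : ℝ) ≠ 0 := NeZero.ne _
  let f : AddConstMap ℝ ℝ (2 * Real.pi / q) (b - a + C) :=
    ⟨fun θ => φ (1, θ), fun θ => (hC θ).trans (add_assoc _ _ _)⟩
  have hiter : φ (1, 0 + q • (2 * Real.pi / q)) = φ (1, 0) + q • (b - a + C) :=
    AddConstMapClass.map_add_nsmul f 0 q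
  rw [nsmul_eq_mul, mul_div_cancel₀ _ hq0, angle_periodic hp hh hh' hφ, left_eq_add, nsmul_eq_mul,
    mul_eq_zero_iff_left hq0] at hiter
  rw [show a = b + C by linear_combination -hiter, expI_add, hCexp, mul_one]

end Angle

theorem HasMonodromy.expI_eq_or_eq_neg [NeZero p] [NeZero q] (hp : Even p) {a b : ℝ}
    (hF : HasMonodromy F k (expI a)) (hF' : HasMonodromy F k (expI b)) :
    expI a = expI b ∨ expI (-a) = expI b := by
  obtain ⟨h, hh, hlift⟩ := hF
  obtain ⟨h', hh', hlift'⟩ := hF'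
  obtain ⟨ν, hν, H | H⟩ := hlift.exists_eq_mul_expI hlift' hh.continuous hh'.continuous
  · exact .inl (hh.expI_eq_expI hp (funext H ▸ hh') hν)
  · exact .inr (hh.mul_k.expI_eq_expI hp (funext H ▸ hh') hν)

end Invariants

section Models

/-- The holonomy `exp (i (π p / 2 + 2 π s / q))` around the exceptional circle `t = 1` in the
sector numbered `s`; its `q`-th power is `k ^ p` when `p` is even and `q` is odd. -/
noncomputable def rightHolonomy (p q : ℕ) (s : ℤ) : S3 :=
  expI (p * Real.pi / 2 + 2 * Real.pi * s / q)

theorem rightHolonomy_eq_iff [NeZero q] {s r : ℤ} :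
    rightHolonomy p q s = rightHolonomy p q r ↔ (q : ℤ) ∣ s - r := by
  have hq0 : (q : ℝ) ≠ 0 := NeZero.ne _
  rw [rightHolonomy, rightHolonomy, expI_eq_expI_iff]
  refine exists_congr fun m => ?_
  rw [← @Int.cast_inj ℝ]
  push_cast
  constructor <;> intro hm
  · field_simp at hm
    linear_combination hm / 4
  · field_simp
    linear_combination 4 * hm

theorem expI_neg_rightHolonomy (hp : Even p) (s : ℤ) :
    expI (-(p * Real.pi / 2 + 2 * Real.pi * s / q)) = rightHolonomy p q (-s) := by
  obtain ⟨l, rfl⟩ := hp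
  refine expI_eq_expI_iff.2 ⟨-l, ?_⟩
  push_cast
  ring

/-- The quaternion `1 + j`; it turns left multiplication by `i` into right multiplication by `k`. -/
def oneAddJ : ℍ[ℝ] := ⟨1, 0, 1, 0⟩

@[simp] theorem re_oneAddJ : oneAddJ.re = 1 := rfl

@[simp] theorem imI_oneAddJ : oneAddJ.imI = 0 := rfl

@[simp] theorem imJ_oneAddJ : oneAddJ.imJ = 1 := rfl

@[simp] theorem imK_oneAddJ : oneAddJ.imK = 0 := rfl

theorem semiconjBy_oneAddJ : SemiconjBy oneAddJ k (expI (Real.pi / 2) : ℍ[ℝ]) := by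
  ext <;> simp

theorem semiconjBy_oneAddJ_pow (hp : Even p) :
    SemiconjBy oneAddJ (k ^ p : S3) (k ^ p : S3) := by
  have hpow := semiconjBy_oneAddJ.pow_right p
  rwa [← Metric.unitSphere.coe_pow, ← Metric.unitSphere.coe_pow, expI_pow, ← mul_div_assoc,
    ← k_pow_of_even hp] at hpow

/-- The quaternion-valued map `(1 - t) e^{i p θ / 4} (1 + j) + t e^{i (q p / 4 + s) θ}` on the
strip. Its direction represents the sector numbered `s`. -/
noncomputable def modelMap (p q : ℕ) (s : ℤ) (x : I × ℝ) : ℍ[ℝ] :=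
  (1 - x.1 : ℝ) • (expI (p / 4 * x.2) * oneAddJ) + (x.1 : ℝ) • expI ((q * p / 4 + s) * x.2)

theorem modelMap_zero (s : ℤ) (θ : ℝ) : modelMap p q s (0, θ) = expI (p / 4 * θ) * oneAddJ := by
  simp [modelMap]

theorem modelMap_one (s : ℤ) (θ : ℝ) : modelMap p q s (1, θ) = expI ((q * p / 4 + s) * θ) := by
  simp [modelMap]

theorem continuous_modelMap (s : ℤ) : Continuous (modelMap p q s) := by
  have hexpI (c : ℝ) : Continuous fun x : I × ℝ => (expI (c * x.2) : ℍ[ℝ]) :=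
    continuous_subtype_val.comp (by fun_prop)
  exact ((by fun_prop : Continuous fun x : I × ℝ => 1 - (x.1 : ℝ)).smul
    ((hexpI _).mul continuous_const)).add
      ((by fun_prop : Continuous fun x : I × ℝ => (x.1 : ℝ)).smul (hexpI _))

theorem modelMap_ne_zero (s : ℤ) (x : I × ℝ) : modelMap p q s x ≠ 0 := by
  intro h0
  have hJ : (1 - (x.1 : ℝ)) * Real.cos (p / 4 * x.2) = 0 := by
    simpa [modelMap] using congrArg QuaternionAlgebra.imJ h0
  have hK : (1 - (x.1 : ℝ)) * Real.sin (p / 4 * x.2) = 0 := by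
    simpa [modelMap] using congrArg QuaternionAlgebra.imK h0
  have hsq : (1 - (x.1 : ℝ)) ^ 2 = 0 := by
    linear_combination (1 - (x.1 : ℝ)) * (Real.cos (p / 4 * x.2) * hJ +
      Real.sin (p / 4 * x.2) * hK) -
      (1 - (x.1 : ℝ)) ^ 2 * Real.sin_sq_add_cos_sq (p / 4 * x.2)
  have ht : (x.1 : ℝ) = 1 := (sub_eq_zero.1 (sq_eq_zero_iff.1 hsq)).symm
  rw [show x = (1, x.2) from Prod.ext (Subtype.ext ht) rfl, modelMap_one] at h0
  exact ne_zero_of_mem_unit_sphere _ h0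

theorem modelMap_add_two_pi (hp : Even p) (hq : Odd q) (s : ℤ) (t : I) (θ : ℝ) :
    modelMap p q s (t, θ + 2 * Real.pi) = modelMap p q s (t, θ) * (k ^ p : S3) := by
  have hleft : expI (p / 4 * (θ + 2 * Real.pi)) = expI (p / 4 * θ) * k ^ p := by
    rw [k_pow_of_even hp, ← expI_add]
    ring_nf
  have hright : expI ((q * p / 4 + s) * (θ + 2 * Real.pi)) =
      expI ((q * p / 4 + s) * θ) * k ^ p := by
    rw [k_pow_of_even hp, ← expI_add, expI_eq_expI_iff]
    obtain ⟨l, rfl⟩ := hp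
    obtain ⟨m, rfl⟩ := hq
    exact ⟨m * l + s, by push_cast; ring⟩
  simp only [modelMap]
  rw [hleft, hright, add_mul (_ • _), smul_mul_assoc, smul_mul_assoc, mul_assoc _ oneAddJ,
    (semiconjBy_oneAddJ_pow hp).eq, Metric.unitSphere.coe_mul, Metric.unitSphere.coe_mul, mul_assoc]

theorem isEquivariant_normalize_modelMap [NeZero p] [NeZero q] (hp : Even p) (hq : Odd q)
    (s : ℤ) :
    IsEquivariant p q k (rightHolonomy p q s) fun x => normalize (modelMap p q s x) := by
  have hp0 : (p : ℝ) ≠ 0 := NeZero.ne _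
  have hq0 : (q : ℝ) ≠ 0 := NeZero.ne _
  have hnormalize {x y : I × ℝ} {c : S3} (hxy : modelMap p q s y = modelMap p q s x * c) :
      normalize (modelMap p q s y) = normalize (modelMap p q s x) * c := by
    rw [hxy, normalize_mul_coe (modelMap_ne_zero s x)]
  refine ⟨continuousOn_normalize.comp_continuous (continuous_modelMap s) (modelMap_ne_zero s),
    fun t θ => hnormalize (modelMap_add_two_pi hp hq s t θ), fun θ => hnormalize ?_,
    fun θ => hnormalize ?_⟩
  · rw [modelMap_zero, modelMap_zero, mul_assoc, semiconjBy_oneAddJ.eq, ← mul_assoc,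
      ← Metric.unitSphere.coe_mul, ← expI_add]
    congr 3
    field_simp
    ring
  · rw [modelMap_one, modelMap_one, ← Metric.unitSphere.coe_mul, rightHolonomy, ← expI_add]
    congr 2
    field_simp
    ring

theorem exists_hasMonodromy_rightHolonomy [NeZero p] [NeZero q] (hp : Even p) (hq : Odd q)
    (s : ℤ) : ∃ F : C(Mpq p q, RP2), HasMonodromy F k (rightHolonomy p q s) :=
  (isEquivariant_normalize_modelMap hp hq s).exists_hasMonodromy k_smul_basePoint
    (expI_smul_basePoint _)

theorem exists_hasMonodromy_one : ∃ F : C(Mpq p q, RP2), HasMonodromy F 1 1 :=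
  IsEquivariant.exists_hasMonodromy (h := fun _ => 1)
    ⟨continuous_const, by simp, by simp, by simp⟩ (one_smul _ _) (one_smul _ _)

end Models

section Classification

variable [NeZero q]

theorem exists_hasMonodromy_rightHolonomy_of_expI (hp : Even p) (hq : Odd q)
    {F : C(Mpq p q, RP2)} {β : ℝ} (hF : HasMonodromy F k (expI β)) :
    ∃ s : ℤ, HasMonodromy F k (rightHolonomy p q s) := by
  obtain ⟨h, hh, hlift⟩ := hF
  have hpow := hh.pow_eq_pow
  rw [k_pow_of_even hp, expI_pow, eq_comm, expI_eq_expI_iff] at hpow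
  obtain ⟨m, hm⟩ := hpow
  have hq0 : (q : ℝ) ≠ 0 := NeZero.ne _
  obtain ⟨l, rfl⟩ := hp
  obtain ⟨n, rfl⟩ := hq
  suffices hβ : β = ↑(l + l) * Real.pi / 2 + 2 * Real.pi * ↑(m - n * l) / ↑(2 * n + 1) from
    ⟨m - n * l, h, by rwa [rightHolonomy, ← hβ], hlift⟩
  apply mul_left_cancel₀ hq0
  rw [hm]
  field_simp
  push_cast
  ring

theorem HasMonodromy.exists_le_half (hp : Even p) {F : C(Mpq p q, RP2)} {s : ℤ}
    (hF : HasMonodromy F k (rightHolonomy p q s)) :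
    ∃ r : ℕ, 2 * r ≤ q ∧ HasMonodromy F k (rightHolonomy p q r) := by
  have hq : (q : ℤ) ≠ 0 := NeZero.ne _
  have hlt := Int.emod_lt_of_pos s (b := q) (by positivity)
  obtain ⟨r, hr⟩ := Int.eq_ofNat_of_zero_le (Int.emod_nonneg s hq)
  have hdvd : (q : ℤ) ∣ s - r := hr ▸ Int.dvd_self_sub_emod
  rcases le_total (2 * r) q with hle | hle
  · exact ⟨r, hle, rightHolonomy_eq_iff.2 hdvd ▸ hF⟩
  · refine ⟨q - r, by omega, ?_⟩
    have hneg := hF.neg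
    rwa [expI_neg_rightHolonomy hp, (rightHolonomy_eq_iff (r := ↑(q - r))).2] at hneg
    rw [Nat.cast_sub (by omega), show -s - ((q : ℤ) - r) = -(s - r) - q by ring]
    exact (dvd_neg.2 hdvd).sub dvd_rfl

/-- The holonomies of the representative lifts: `none` stands for the sector of maps that lift to
`S²`, and `some r` for the sector numbered `r`. -/
noncomputable def holonomies (p q : ℕ) : Option (Fin (q / 2 + 1)) → S3 × S3
  | none => (1, 1)
  | some r => (k, rightHolonomy p q (r : ℕ))

variable [NeZero p]

theorem exists_hasMonodromy_holonomies (hp : Even p) (hpq : p.Coprime q) (F : C(Mpq p q, RP2)) :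
    ∃ i, HasMonodromy F (holonomies p q i).1 (holonomies p q i).2 := by
  have hq := (Nat.Coprime.coprime_dvd_left hp.two_dvd hpq).odd_of_left
  obtain ⟨κ, β, rfl | rfl, hF⟩ := exists_hasMonodromy_expI hp hq F
  · exact ⟨none, hF.one_one hpq⟩
  · obtain ⟨s, hs⟩ := exists_hasMonodromy_rightHolonomy_of_expI hp hq hF
    obtain ⟨r, hr, hFr⟩ := hs.exists_le_half hp
    exact ⟨some ⟨r, by omega⟩, hFr⟩

theorem HasMonodromy.holonomies_unique (hp : Even p) (hq : Odd q) {F : C(Mpq p q, RP2)}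
    {i j : Option (Fin (q / 2 + 1))}
    (hi : HasMonodromy F (holonomies p q i).1 (holonomies p q i).2)
    (hj : HasMonodromy F (holonomies p q j).1 (holonomies p q j).2) : i = j := by
  match i, j with
  | none, none => rfl
  | none, some _ => exact (hi.not_one_and_k hj).elim
  | some _, none => exact (hj.not_one_and_k hi).elim
  | some r, some r' =>
    obtain ⟨m, rfl⟩ := hq
    rw [Option.some_inj, Fin.ext_iff]
    rcases hi.expI_eq_or_eq_neg hp hj with h | h
    · have hdvd := rightHolonomy_eq_iff.1 h
      have := Int.eq_zero_of_abs_lt_dvd hdvd (by rw [abs_lt]; omega)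
      omega
    · rw [expI_neg_rightHolonomy hp] at h
      have hdvd := rightHolonomy_eq_iff.1 h
      have := Int.eq_zero_of_abs_lt_dvd hdvd (by rw [abs_lt]; omega)
      omega

theorem exists_of_holonomies (hp : Even p) (hq : Odd q) :
    ∀ i, ∃ F : C(Mpq p q, RP2), HasMonodromy F (holonomies p q i).1 (holonomies p q i).2
  | none => exists_hasMonodromy_one
  | some r => exists_hasMonodromy_rightHolonomy hp hq r

end Classification

end Mpq

theorem freeHomotopyClasses_M23_RP2_general {p q : ℕ} [NeZero p] (hp : Even p)
    (hpq : p.Coprime q) :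
    Nonempty (FreeHomotopyClasses (Mpq p q) RP2 ≃ Fin (q / 2 + 2)) := by
  have hq := (Nat.Coprime.coprime_dvd_left hp.two_dvd hpq).odd_of_left
  have : NeZero q := ⟨hq.pos.ne'⟩
  choose F hF using Mpq.exists_of_holonomies (p := p) hp hq
  refine ⟨(Equiv.ofBijective (fun i => Quot.mk _ (F i)) ⟨fun i j hij => ?_, ?_⟩).symm.trans
    (finSuccEquiv _).symm⟩
  · have hhom := FreeHomotopyClasses.mk_eq_mk_iff.1 hij
    exact ((hF i).of_homotopic hhom).holonomies_unique hp hq (hF j)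
  · rintro ⟨G⟩
    obtain ⟨i, hi⟩ := Mpq.exists_hasMonodromy_holonomies hp hpq G
    exact ⟨i, FreeHomotopyClasses.mk_eq_mk_iff.2 ((hF i).homotopic hi)⟩

/-- The set `[M_{2,3}, ℝP²]` of free homotopy classes of maps from the trefoil-knot
complement model `M_{2,3}` to the real projective plane has exactly three elements. -/
theorem freeHomotopyClasses_M23_RP2 :
    Nonempty (FreeHomotopyClasses (Mpq 2 3) RP2 ≃ Fin 3) :=
  freeHomotopyClasses_M23_RP2_general even_two (by norm_num)
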